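/- arXiv:2307.10418 — 7 statements merged into one kernel-verified Lean document; each statement's English description precedes it below -/
import Mathlib

section
/- Let 𝔤 be a finite-dimensional complex Lie algebra, let f, g ∈ S(𝔤) be semi-invariants (with weights χ_f, χ_g ∈ 𝔤*), and let a ∈ 𝔤*. Then for all λ, μ ∈ ℂ the shifted polynomials F(x) = f(a + λx) and G(x) = g(a + μx) are in involution with respect to the Lie–Poisson bracket: {F, G}(x) = 0 for every x ∈ 𝔤*. -/
/-- A function on the dual space `𝔤* ≅ L →L[ℂ] ℂ` is a polynomial function
(i.e. corresponds to an element of the symmetric algebra `S(𝔤)`) if it lies in the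
`ℂ`-subalgebra of functions generated by the evaluations `x ↦ ⟨x, ξ⟩`, `ξ ∈ 𝔤`. -/
def IsPolyFun (L : Type*) [NormedAddCommGroup L] [NormedSpace ℂ L]
    (p : (L →L[ℂ] ℂ) → ℂ) : Prop :=
  p ∈ Algebra.adjoin ℂ (Set.range fun ξ : L => fun x : L →L[ℂ] ℂ => x ξ)

/-- `dp` represents the differential of `p : 𝔤* → ℂ`, with `dp x ∈ 𝔤` identified with a
linear functional on `𝔤*` via the canonical isomorphism `𝔤 ≅ 𝔤**`:
`(fderiv ℂ p x) v = ⟨v, dp x⟩` for all `v ∈ 𝔤*`. -/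
def RepDeriv (L : Type*) [NormedAddCommGroup L] [NormedSpace ℂ L]
    (p : (L →L[ℂ] ℂ) → ℂ) (dp : (L →L[ℂ] ℂ) → L) : Prop :=
  ∀ x v : L →L[ℂ] ℂ, fderiv ℂ p x v = v (dp x)

/-- The bilinear map `B` is a Lie bracket on the complex vector space `L` (which carries a
norm only in order to speak about differentials and analyticity; in finite dimension all
norms are equivalent): `B` is alternating and satisfies the Jacobi identity. -/
def IsLieBracket (L : Type*) [NormedAddCommGroup L] [NormedSpace ℂ L]
    (B : L →ₗ[ℂ] L →ₗ[ℂ] L) : Prop :=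
  (∀ ξ : L, B ξ ξ = 0) ∧
    ∀ ξ η ζ : L, B ξ (B η ζ) = B (B ξ η) ζ + B η (B ξ ζ)

/-- `g ∈ S(𝔤)` is a semi-invariant with weight `χ ∈ 𝔤*`:
`⟨x, [ξ, dg(x)]⟩ = χ(ξ) · g(x)` for all `ξ ∈ 𝔤`, `x ∈ 𝔤*`. -/
def IsSemiInvariant (L : Type*) [NormedAddCommGroup L] [NormedSpace ℂ L]
    (B : L →ₗ[ℂ] L →ₗ[ℂ] L) (g : (L →L[ℂ] ℂ) → ℂ) (χ : L →L[ℂ] ℂ) : Prop :=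
  IsPolyFun L g ∧ g ≠ 0 ∧
    ∃ dg : (L →L[ℂ] ℂ) → L, RepDeriv L g dg ∧
      ∀ (ξ : L) (x : L →L[ℂ] ℂ), x (B ξ (dg x)) = χ ξ * g x

/-!
For semi-invariants `f`, `g` with weights `χf`, `χg`, skew-symmetry of the bracket gives
`g · ∂f/∂χg + f · ∂g/∂χf = 0`. With `f = g` this says that `g` is constant along its own weight.
Hence, on a line in the direction `χg`, both `g` and `∂g/∂χf` are constants, and the identity is a
first-order linear differential equation with constant coefficients for the polynomial `f`; a
nonzero polynomial has larger degree than its derivative, so `g · ∂f/∂χg = 0` and hence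
`∂f/∂χg = 0`. Exchanging `f` and `g`, one gets `⟨y, [df(y), dg(z)]⟩ = 0 = ⟨z, [df(y), dg(z)]⟩` for
all `y`, `z`. For `y = a + λx` and `z = a + μx` the difference of the two pairings is
`(λ - μ) ⟨x, [df(y), dg(z)]⟩`. Since `⟨x, [df(y), dg(a + μx)]⟩` is polynomial in `μ`, the factor
`λ - μ` can be cancelled even when `λ = μ`.
-/

theorem C_mul_derivative_eq_zero_of_eq_C_mul {R : Type*} [Semiring R] [NoZeroDivisors R]
    {P : Polynomial R} {q r : R} (h : .C q * P.derivative = .C r * P) :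
    .C q * P.derivative = 0 := by
  by_contra hne
  obtain ⟨hq, -⟩ := mul_ne_zero_iff.mp hne
  obtain ⟨hr, hP⟩ := mul_ne_zero_iff.mp (h ▸ hne)
  have hdeg : P.derivative.degree = P.degree := by
    rw [← Polynomial.degree_C_mul (Polynomial.C_ne_zero.mp hq), h,
      Polynomial.degree_C_mul (Polynomial.C_ne_zero.mp hr)]
  exact (Polynomial.degree_derivative_lt hP).ne hdeg

theorem apply_add_smul_eq_of_fderiv_apply_eq_zero {𝕜 E F : Type*} [RCLike 𝕜]
    [NormedAddCommGroup E] [NormedSpace 𝕜 E] [NormedAddCommGroup F] [NormedSpace 𝕜 F]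
    {p : E → F} (hp : Differentiable 𝕜 p) {v : E} (hv : ∀ x, fderiv 𝕜 p x v = 0) (x : E) (t : 𝕜) :
    p (x + t • v) = p x := by
  have hderiv (s : 𝕜) : deriv (fun s : 𝕜 => p (x + s • v)) s = 0 := by
    rw [(hp _).deriv_comp_add_smul, hv]
  simpa only [zero_smul, add_zero] using
    is_const_of_deriv_eq_zero (by fun_prop) hderiv t 0

section Differential

variable {L : Type*} [NormedAddCommGroup L] [NormedSpace ℂ L]
  {p q : (L →L[ℂ] ℂ) → ℂ} {dp dq : (L →L[ℂ] ℂ) → L}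

theorem RepDeriv.unique (hdp : RepDeriv L p dp) (hdq : RepDeriv L p dq) : dp = dq := by
  funext x
  refine (SeparatingDual.eq_iff_forall_dual_eq (R := ℂ)).mpr fun v => ?_
  rw [← hdp x v, hdq x v]

theorem RepDeriv.comp_add_smul (hdp : RepDeriv L p dp) (a : L →L[ℂ] ℂ) (c : ℂ) :
    RepDeriv L (fun x => p (a + c • x)) fun x => c • dp (a + c • x) := by
  intro x v
  rw [fderiv_comp_smul (f := fun y => p (a + y)), fderiv_comp_add_left, smul_apply, hdp, map_smul]

theorem IsPolyFun.differentiable (hp : IsPolyFun L p) : Differentiable ℂ p := by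
  induction hp using Algebra.adjoin_induction with
  | mem p hp =>
    obtain ⟨ξ, rfl⟩ := hp
    exact (ContinuousLinearMap.apply ℂ ℂ ξ).differentiable
  | algebraMap r => exact differentiable_const r
  | add p q _ _ hp hq => exact hp.add hq
  | mul p q _ _ hp hq => exact hp.mul hq

theorem IsPolyFun.exists_polynomial_on_line (hp : IsPolyFun L p) (x v : L →L[ℂ] ℂ) :
    ∃ P : Polynomial ℂ, ∀ t : ℂ, P.eval t = p (x + t • v) := by
  induction hp using Algebra.adjoin_induction with
  | mem p hp =>
    obtain ⟨ξ, rfl⟩ := hp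
    exact ⟨.C (x ξ) + .X * .C (v ξ), fun t => by simp [mul_comm t]⟩
  | algebraMap r => exact ⟨.C r, fun t => by simp⟩
  | add p q _ _ hp hq =>
    obtain ⟨P, hP⟩ := hp
    obtain ⟨Q, hQ⟩ := hq
    exact ⟨P + Q, fun t => by simp [hP, hQ]⟩
  | mul p q _ _ hp hq =>
    obtain ⟨P, hP⟩ := hp
    obtain ⟨Q, hQ⟩ := hq
    exact ⟨P * Q, fun t => by simp [hP, hQ]⟩

theorem IsPolyFun.eq_zero_or_eq_zero_of_mul_eq_zero (hp : IsPolyFun L p) (hq : IsPolyFun L q)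
    (hpq : p * q = 0) : p = 0 ∨ q = 0 := by
  by_contra! hne
  obtain ⟨x, hx⟩ := Function.ne_iff.mp hne.1
  obtain ⟨y, hy⟩ := Function.ne_iff.mp hne.2
  obtain ⟨P, hP⟩ := hp.exists_polynomial_on_line x (y - x)
  obtain ⟨Q, hQ⟩ := hq.exists_polynomial_on_line x (y - x)
  have hPQ : P * Q = 0 := Polynomial.funext fun t => by
    simpa [hP, hQ] using congrFun hpq (x + t • (y - x))
  rcases mul_eq_zero.mp hPQ with rfl | rfl
  · have hpx : p x = 0 := by
      simpa only [zero_smul ℂ (y - x), add_zero, Polynomial.eval_zero] using (hP 0).symm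
    exact hx hpx
  · exact hy (by simpa using (hQ 1).symm)

theorem IsPolyFun.exists_repDeriv (hp : IsPolyFun L p) :
    ∃ dp, RepDeriv L p dp ∧ ∀ φ : L →ₗ[ℂ] ℂ, IsPolyFun L fun x => φ (dp x) := by
  induction hp using Algebra.adjoin_induction with
  | mem p hp =>
    obtain ⟨ξ, rfl⟩ := hp
    refine ⟨fun _ => ξ, fun x v => ?_, fun φ => Subalgebra.algebraMap_mem _ (φ ξ)⟩
    exact DFunLike.congr_fun (ContinuousLinearMap.apply ℂ ℂ ξ).fderiv v
  | algebraMap r =>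
    refine ⟨0, fun x v => ?_, fun φ => ?_⟩
    · rw [Pi.zero_apply, map_zero]
      exact DFunLike.congr_fun (fderiv_const_apply r) v
    · simp only [Pi.zero_apply, map_zero]
      exact Subalgebra.zero_mem _
  | add p q hp hq ihp ihq =>
    obtain ⟨dp, hdp, hφp⟩ := ihp
    obtain ⟨dq, hdq, hφq⟩ := ihq
    refine ⟨dp + dq, fun x v => ?_, fun φ => ?_⟩
    · rw [fderiv_add (IsPolyFun.differentiable hp x) (IsPolyFun.differentiable hq x)]
      simp [hdp x v, hdq x v]
    · simp only [Pi.add_apply, map_add]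
      exact Subalgebra.add_mem _ (hφp φ) (hφq φ)
  | mul p q hp hq ihp ihq =>
    obtain ⟨dp, hdp, hφp⟩ := ihp
    obtain ⟨dq, hdq, hφq⟩ := ihq
    refine ⟨p • dq + q • dp, fun x v => ?_, fun φ => ?_⟩
    · rw [fderiv_mul (IsPolyFun.differentiable hp x) (IsPolyFun.differentiable hq x)]
      simp [hdp x v, hdq x v]
    · simp only [Pi.add_apply, Pi.smul_apply', map_add, map_smul, smul_eq_mul]
      exact Subalgebra.add_mem _ (Subalgebra.mul_mem _ hp (hφq φ)) (Subalgebra.mul_mem _ hq (hφp φ))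

theorem IsPolyFun.comp_repDeriv (hp : IsPolyFun L p) (hdp : RepDeriv L p dp) (φ : L →ₗ[ℂ] ℂ) :
    IsPolyFun L fun x => φ (dp x) := by
  obtain ⟨dp', hdp', hφ⟩ := hp.exists_repDeriv
  rw [hdp.unique hdp']
  exact hφ φ

theorem IsPolyFun.fderiv_apply (hp : IsPolyFun L p) (v : L →L[ℂ] ℂ) :
    IsPolyFun L fun x => fderiv ℂ p x v := by
  obtain ⟨dp, hdp, hφ⟩ := hp.exists_repDeriv
  simp only [hdp _ v]
  exact hφ v

theorem IsPolyFun.mul_fderiv_eq_zero_of_eq_mul (hp : IsPolyFun L p) {r : (L →L[ℂ] ℂ) → ℂ}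
    {v : L →L[ℂ] ℂ} (hq : ∀ x (t : ℂ), q (x + t • v) = q x)
    (hr : ∀ x (t : ℂ), r (x + t • v) = r x) (h : ∀ x, q x * fderiv ℂ p x v = r x * p x)
    (x : L →L[ℂ] ℂ) : q x * fderiv ℂ p x v = 0 := by
  obtain ⟨P, hP⟩ := hp.exists_polynomial_on_line x v
  have hP' (t : ℂ) : P.derivative.eval t = fderiv ℂ p (x + t • v) v := by
    rw [← (hp.differentiable _).deriv_comp_add_smul, ← P.deriv]
    simp only [hP]
  have hode : .C (q x) * P.derivative = .C (r x) * P := Polynomial.funext fun t => by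
    simpa [hP, hP', hq, hr] using h (x + t • v)
  simpa only [Polynomial.eval_mul, Polynomial.eval_C, hP', zero_smul ℂ v, add_zero,
    Polynomial.eval_zero] using
    congrArg (Polynomial.eval 0) (C_mul_derivative_eq_zero_of_eq_C_mul hode)

end Differential

namespace IsSemiInvariant

variable {L : Type*} [NormedAddCommGroup L] [NormedSpace ℂ L] {B : L →ₗ[ℂ] L →ₗ[ℂ] L}
  {f g : (L →L[ℂ] ℂ) → ℂ} {χ χf χg : L →L[ℂ] ℂ} {df dg : (L →L[ℂ] ℂ) → L}

theorem apply_bracket (hg : IsSemiInvariant L B g χ) (hdg : RepDeriv L g dg) (ξ : L)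
    (x : L →L[ℂ] ℂ) : x (B ξ (dg x)) = χ ξ * g x := by
  obtain ⟨-, -, dg', hdg', h⟩ := hg
  rw [hdg.unique hdg', h]

theorem mul_fderiv_weight_eq_neg (hf : IsSemiInvariant L B f χf) (hg : IsSemiInvariant L B g χg)
    (hB : B.IsAlt) (x : L →L[ℂ] ℂ) : g x * fderiv ℂ f x χg = -fderiv ℂ g x χf * f x := by
  obtain ⟨-, -, df, hdf, hf⟩ := hf
  obtain ⟨-, -, dg, hdg, hg⟩ := hg
  calc g x * fderiv ℂ f x χg = x (B (df x) (dg x)) := by rw [hdf, hg, mul_comm]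
    _ = -x (B (dg x) (df x)) := by rw [← hB.neg, map_neg]
    _ = -fderiv ℂ g x χf * f x := by rw [hdg, hf, neg_mul]

theorem fderiv_weight_self (hg : IsSemiInvariant L B g χ) (hB : B.IsAlt) (x : L →L[ℂ] ℂ) :
    fderiv ℂ g x χ = 0 := by
  have hmul : g * (fun x => fderiv ℂ g x χ) = 0 := by
    funext y
    have h := hg.mul_fderiv_weight_eq_neg hg hB y
    rw [neg_mul, mul_comm (fderiv ℂ g y χ)] at h
    exact self_eq_neg.mp h
  exact congrFun ((hg.1.eq_zero_or_eq_zero_of_mul_eq_zero (hg.1.fderiv_apply χ) hmul).resolve_left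
    hg.2.1) x

theorem add_smul_weight (hg : IsSemiInvariant L B g χ) (hB : B.IsAlt) (x : L →L[ℂ] ℂ) (t : ℂ) :
    g (x + t • χ) = g x :=
  apply_add_smul_eq_of_fderiv_apply_eq_zero hg.1.differentiable (hg.fderiv_weight_self hB) x t

theorem fderiv_add_smul_weight (hg : IsSemiInvariant L B g χ) (hB : B.IsAlt) (x : L →L[ℂ] ℂ)
    (t : ℂ) : fderiv ℂ g (x + t • χ) = fderiv ℂ g x := by
  rw [← fderiv_comp_add_right]
  simp only [hg.add_smul_weight hB]

theorem fderiv_weight (hf : IsSemiInvariant L B f χf) (hg : IsSemiInvariant L B g χg)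
    (hB : B.IsAlt) (x : L →L[ℂ] ℂ) : fderiv ℂ f x χg = 0 := by
  have hmul : g * (fun x => fderiv ℂ f x χg) = 0 := funext <|
    hf.1.mul_fderiv_eq_zero_of_eq_mul (hg.add_smul_weight hB)
      (r := fun x => -fderiv ℂ g x χf) (fun x t => by simp only [hg.fderiv_add_smul_weight hB])
      (hf.mul_fderiv_weight_eq_neg hg hB)
  exact congrFun ((hg.1.eq_zero_or_eq_zero_of_mul_eq_zero (hf.1.fderiv_apply χg) hmul).resolve_left
    hg.2.1) x

theorem apply_bracket_eq_zero (hf : IsSemiInvariant L B f χf)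
    (hg : IsSemiInvariant L B g χg) (hB : B.IsAlt) (hdf : RepDeriv L f df)
    (hdg : RepDeriv L g dg) (y z : L →L[ℂ] ℂ) : z (B (df y) (dg z)) = 0 := by
  rw [hg.apply_bracket hdg, ← hdf, hf.fderiv_weight hg hB, zero_mul]

theorem apply_bracket_shift_eq_zero (hf : IsSemiInvariant L B f χf)
    (hg : IsSemiInvariant L B g χg) (hB : B.IsAlt) (hdf : RepDeriv L f df)
    (hdg : RepDeriv L g dg) (a x : L →L[ℂ] ℂ) (c d : ℂ) :
    x (B (df (a + c • x)) (dg (a + d • x))) = 0 := by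
  obtain ⟨P, hP⟩ := (hg.1.comp_repDeriv hdg
    ((x : L →ₗ[ℂ] ℂ) ∘ₗ B (df (a + c • x)))).exists_polynomial_on_line a x
  simp only [LinearMap.comp_apply, ContinuousLinearMap.coe_coe] at hP
  have hmul : (.C c - .X) * P = 0 := Polynomial.funext fun t => by
    have hy : (a + c • x) (B (df (a + c • x)) (dg (a + t • x))) = 0 := by
      rw [← hB.neg, map_neg, hg.apply_bracket_eq_zero hf hB hdg hdf, neg_zero]
    have hz : (a + t • x) (B (df (a + c • x)) (dg (a + t • x))) = 0 :=
      hf.apply_bracket_eq_zero hg hB hdf hdg _ _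
    simp only [add_apply, smul_apply, smul_eq_mul] at hy hz
    simp only [Polynomial.eval_mul, Polynomial.eval_sub, Polynomial.eval_C, Polynomial.eval_X, hP,
      Polynomial.eval_zero]
    linear_combination hy - hz
  have hP0 : P = 0 :=
    (mul_eq_zero.mp hmul).resolve_left (sub_ne_zero.mpr (Polynomial.X_ne_C c).symm)
  rw [← hP, hP0, Polynomial.eval_zero]

end IsSemiInvariant

theorem shifts_of_semiInvariants_lie_poisson_involution_general
    {L : Type*} [NormedAddCommGroup L] [NormedSpace ℂ L]
    {B : L →ₗ[ℂ] L →ₗ[ℂ] L} (hB : B.IsAlt)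
    {f g : (L →L[ℂ] ℂ) → ℂ} {χf χg : L →L[ℂ] ℂ}
    (hf : IsSemiInvariant L B f χf) (hg : IsSemiInvariant L B g χg)
    (a : L →L[ℂ] ℂ) (lam mu : ℂ) {dF dG : (L →L[ℂ] ℂ) → L}
    (hdF : RepDeriv L (fun x => f (a + lam • x)) dF)
    (hdG : RepDeriv L (fun x => g (a + mu • x)) dG) (x : L →L[ℂ] ℂ) :
    x (B (dF x) (dG x)) = 0 := by
  obtain ⟨df, hdf, -⟩ := hf.2.2
  obtain ⟨dg, hdg, -⟩ := hg.2.2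
  rw [hdF.unique (hdf.comp_add_smul a lam), hdG.unique (hdg.comp_add_smul a mu)]
  simp only [map_smul, LinearMap.smul_apply, hf.apply_bracket_shift_eq_zero hg hB hdf hdg,
    smul_zero]

/-- Shifts of semi-invariants are in involution w.r.t. the Lie–Poisson bracket
`{F,G}(x) = ⟨x, [dF(x), dG(x)]⟩`: for semi-invariants `f, g` and `λ, μ ∈ ℂ`, the functions
`F(x) = f(a + λx)` and `G(x) = g(a + μx)` satisfy `{F,G}(x) = 0` for all `x ∈ 𝔤*`. -/
theorem shifts_of_semiInvariants_lie_poisson_involution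
    {L : Type*} [NormedAddCommGroup L] [NormedSpace ℂ L] [FiniteDimensional ℂ L]
    (B : L →ₗ[ℂ] L →ₗ[ℂ] L) (hB : IsLieBracket L B)
    (f g : (L →L[ℂ] ℂ) → ℂ) (χf χg : L →L[ℂ] ℂ)
    (hf : IsSemiInvariant L B f χf) (hg : IsSemiInvariant L B g χg)
    (a : L →L[ℂ] ℂ) (lam mu : ℂ)
    (F G : (L →L[ℂ] ℂ) → ℂ)
    (hF : F = fun x => f (a + lam • x)) (hG : G = fun x => g (a + mu • x))
    (dF dG : (L →L[ℂ] ℂ) → L)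
    (hdF : RepDeriv L F dF) (hdG : RepDeriv L G dG) :
    ∀ x : L →L[ℂ] ℂ, x (B (dF x) (dG x)) = 0 := by
  subst hF hG
  exact shifts_of_semiInvariants_lie_poisson_involution_general hB.1 hf hg a lam mu hdF hdG
end

section
/- Let 𝔤 be a finite-dimensional complex Lie algebra and a ∈ 𝔤*. Let A ⊆ S(𝔤) be the ℂ-subalgebra generated by all polynomials of the form x ↦ g(a + λx), where g ranges over all semi-invariants of 𝔤 and λ ranges over ℂ. Then A is commutative with respect to both the Lie–Poisson bracket and the frozen argument bracket at a: for all p, q ∈ A, {p,q}(x) = 0 and {p,q}_a(x) = 0 for every x ∈ 𝔤*. -/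
/-!
Let `f` and `g` be semi-invariants of weights `χ` and `ψ`. Computing `{f, g}` through the
semi-invariance of each gives `f · ∂_χ g = -g · ∂_ψ f`. For `f = g` this shows `∂_χ f = 0`, so `f`
is constant along every line in the direction `χ`. If this constant is nonzero, `g` divides its own
derivative along the line; by degree the derivative vanishes, so `∂_χ g = 0` wherever `f ≠ 0`, and
hence everywhere.

Since `⟨y, [dg(z), df(y)]⟩ = χ(dg(z)) f(y)`, both `y` and `z` annihilate `[df(y), dg(z)]` for
arbitrary points `y` and `z`. If `y = a + s x` and `z = a + t x` with `s ≠ t`, then `y` and `z` have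
the same span as `a` and `x`; the case `s = t` follows since everything is polynomial in `t`. So the
generators commute for both brackets, and the differential of an element of the algebra is a linear
combination of differentials of generators.
-/

section PredualGradient

variable {𝕜 E : Type*} [NontriviallyNormedField 𝕜] [NormedAddCommGroup E] [NormedSpace 𝕜 E]
  {p q : StrongDual 𝕜 E → 𝕜} {ξ η : E} {x : StrongDual 𝕜 E}

/-- The differential at `x` of the function `p` on the dual of `E` exists and is the evaluation at
`ξ : E`. Unlike `RepDeriv`, this includes differentiability. -/
def HasPredualGradientAt (p : StrongDual 𝕜 E → 𝕜) (ξ : E) (x : StrongDual 𝕜 E) : Prop :=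
  HasFDerivAt p (NormedSpace.inclusionInDoubleDual 𝕜 E ξ) x

namespace HasPredualGradientAt

theorem hasFDerivAt (hp : HasPredualGradientAt p ξ x) :
    HasFDerivAt p (NormedSpace.inclusionInDoubleDual 𝕜 E ξ) x := hp

theorem unique [SeparatingDual 𝕜 E] (hξ : HasPredualGradientAt p ξ x)
    (hη : HasPredualGradientAt p η x) : ξ = η :=
  SeparatingDual.eq_iff_forall_dual_eq.2 fun v =>
    DFunLike.congr_fun (hξ.hasFDerivAt.unique hη.hasFDerivAt) v

theorem eval (ξ : E) (x : StrongDual 𝕜 E) : HasPredualGradientAt (fun y => y ξ) ξ x :=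
  (NormedSpace.inclusionInDoubleDual 𝕜 E ξ).hasFDerivAt

theorem const (c : 𝕜) (x : StrongDual 𝕜 E) : HasPredualGradientAt (fun _ => c) 0 x :=
  (hasFDerivAt_const c x).congr_fderiv (map_zero _).symm

theorem add (hp : HasPredualGradientAt p ξ x) (hq : HasPredualGradientAt q η x) :
    HasPredualGradientAt (p + q) (ξ + η) x :=
  (hp.hasFDerivAt.add hq.hasFDerivAt).congr_fderiv (map_add _ _ _).symm

theorem mul (hp : HasPredualGradientAt p ξ x) (hq : HasPredualGradientAt q η x) :
    HasPredualGradientAt (p * q) (p x • η + q x • ξ) x :=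
  (hp.hasFDerivAt.mul hq.hasFDerivAt).congr_fderiv (by simp only [map_add, map_smul])

theorem shift {a : StrongDual 𝕜 E} {t : 𝕜} (hp : HasPredualGradientAt p ξ (a + t • x)) :
    HasPredualGradientAt (fun y => p (a + t • y)) (t • ξ) x := by
  have hshift : HasFDerivAt (fun y => a + t • y) (t • ContinuousLinearMap.id 𝕜 _) x :=
    ((hasFDerivAt_id x).const_smul t).const_add a
  exact (hp.hasFDerivAt.comp x hshift).congr_fderiv (by ext v; simp)

theorem hasDerivAt_line {v : StrongDual 𝕜 E} {t : 𝕜}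
    (hp : HasPredualGradientAt p ξ (x + t • v)) :
    HasDerivAt (fun s : 𝕜 => p (x + s • v)) (v ξ) t := by
  have hline : HasDerivAt (fun s : 𝕜 => x + s • v) v t := by
    simpa using ((hasDerivAt_id t).smul_const v).const_add x
  exact hp.hasFDerivAt.comp_hasDerivAt t hline

theorem eval_derivative {v : StrongDual 𝕜 E} {t : 𝕜} {P : Polynomial 𝕜}
    (hP : ∀ s, P.eval s = p (x + s • v)) (hp : HasPredualGradientAt p ξ (x + t • v)) :
    P.derivative.eval t = v ξ :=
  (P.hasDerivAt t).unique (by simpa only [hP] using hp.hasDerivAt_line)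

theorem mem_span_of_mem_adjoin [SeparatingDual 𝕜 E] {S : Set (StrongDual 𝕜 E → 𝕜)}
    (hS : ∀ p ∈ S, ∃ ξ, HasPredualGradientAt p ξ x) (hp : p ∈ Algebra.adjoin 𝕜 S)
    (hξ : HasPredualGradientAt p ξ x) :
    ξ ∈ Submodule.span 𝕜 {η | ∃ q ∈ S, HasPredualGradientAt q η x} := by
  suffices ∃ η ∈ Submodule.span 𝕜 {η | ∃ q ∈ S, HasPredualGradientAt q η x},
      HasPredualGradientAt p η x by
    obtain ⟨η, hmem, hη⟩ := this
    rwa [hξ.unique hη]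
  clear hξ
  induction hp using Algebra.adjoin_induction with
  | mem q hq =>
    obtain ⟨η, hη⟩ := hS q hq
    exact ⟨η, Submodule.subset_span ⟨q, hq, hη⟩, hη⟩
  | algebraMap c => exact ⟨0, zero_mem _, const c x⟩
  | add q r _ _ hq hr =>
    obtain ⟨η, hηW, hη⟩ := hq
    obtain ⟨ζ, hζW, hζ⟩ := hr
    exact ⟨η + ζ, add_mem hηW hζW, hη.add hζ⟩
  | mul q r _ _ hq hr =>
    obtain ⟨η, hηW, hη⟩ := hq
    obtain ⟨ζ, hζW, hζ⟩ := hr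
    exact ⟨q x • ζ + r x • η,
      add_mem (Submodule.smul_mem _ _ hζW) (Submodule.smul_mem _ _ hηW), hη.mul hζ⟩

end HasPredualGradientAt

end PredualGradient

section PolynomialFunctions

variable {L : Type*} [NormedAddCommGroup L] [NormedSpace ℂ L] {f g : (L →L[ℂ] ℂ) → ℂ}

namespace IsPolyFun

theorem exists_polynomial_eval_line (hf : IsPolyFun L f) (x v : L →L[ℂ] ℂ) :
    ∃ P : Polynomial ℂ, ∀ t : ℂ, P.eval t = f (x + t • v) := by
  induction hf using Algebra.adjoin_induction with
  | mem _ h =>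
    obtain ⟨ξ, rfl⟩ := h
    exact ⟨.C (x ξ) + .C (v ξ) * .X, fun t => by simpa using mul_comm _ _⟩
  | algebraMap c => exact ⟨.C c, fun t => by simp⟩
  | add _ _ _ _ hp hq =>
    obtain ⟨P, hP⟩ := hp
    obtain ⟨Q, hQ⟩ := hq
    exact ⟨P + Q, fun t => by simp [hP, hQ]⟩
  | mul _ _ _ _ hp hq =>
    obtain ⟨P, hP⟩ := hp
    obtain ⟨Q, hQ⟩ := hq
    exact ⟨P * Q, fun t => by simp [hP, hQ]⟩

theorem eq_zero_of_mul_eq_zero (hf : IsPolyFun L f) (hg : IsPolyFun L g) (hf0 : f ≠ 0)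
    (h : f * g = 0) : g = 0 := by
  obtain ⟨y, hy⟩ := Function.ne_iff.1 hf0
  funext x
  obtain ⟨F, hF⟩ := hf.exists_polynomial_eval_line y (x - y)
  obtain ⟨G, hG⟩ := hg.exists_polynomial_eval_line y (x - y)
  have hFG : F * G = 0 := Polynomial.funext fun t => by
    simpa [hF, hG] using congrFun h (y + t • (x - y))
  have hF0 : F ≠ 0 := by
    rintro rfl
    exact hy (by simpa [zero_smul ℂ (x - y)] using (hF 0).symm)
  have hG0 : G = 0 := (mul_eq_zero.1 hFG).resolve_left hF0
  simpa [hG0] using (hG 1).symm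

theorem exists_predualGradient (hf : IsPolyFun L f) :
    ∃ df : (L →L[ℂ] ℂ) → L, (∀ x, HasPredualGradientAt f (df x) x) ∧
      ∀ φ : Module.Dual ℂ L, IsPolyFun L fun x => φ (df x) := by
  induction hf using Algebra.adjoin_induction with
  | mem _ h =>
    obtain ⟨ξ, rfl⟩ := h
    exact ⟨fun _ => ξ, HasPredualGradientAt.eval ξ, fun φ => Subalgebra.algebraMap_mem _ (φ ξ)⟩
  | algebraMap c =>
    exact ⟨fun _ => 0, HasPredualGradientAt.const c, fun φ => Subalgebra.algebraMap_mem _ (φ 0)⟩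
  | add _ _ _ _ hp hq =>
    obtain ⟨dp, hdp, hφp⟩ := hp
    obtain ⟨dq, hdq, hφq⟩ := hq
    refine ⟨fun x => dp x + dq x, fun x => (hdp x).add (hdq x), fun φ => ?_⟩
    simp only [map_add]
    exact add_mem (hφp φ) (hφq φ)
  | mul p q hp hq ihp ihq =>
    obtain ⟨dp, hdp, hφp⟩ := ihp
    obtain ⟨dq, hdq, hφq⟩ := ihq
    refine ⟨fun x => p x • dq x + q x • dp x, fun x => (hdp x).mul (hdq x), fun φ => ?_⟩
    simp only [map_add, map_smul, smul_eq_mul]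
    exact add_mem (mul_mem hp (hφq φ)) (mul_mem hq (hφp φ))

theorem shift (hf : IsPolyFun L f) (a : L →L[ℂ] ℂ) (t : ℂ) :
    IsPolyFun L fun x => f (a + t • x) := by
  induction hf using Algebra.adjoin_induction with
  | mem _ h =>
    obtain ⟨ξ, rfl⟩ := h
    exact add_mem (Subalgebra.algebraMap_mem _ (a ξ))
      (Subalgebra.smul_mem _ (Algebra.subset_adjoin (Set.mem_range_self ξ)) t)
  | algebraMap c => exact Subalgebra.algebraMap_mem _ c
  | add _ _ _ _ hp hq => exact add_mem hp hq
  | mul _ _ _ _ hp hq => exact mul_mem hp hq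

theorem hasPredualGradientAt (hf : IsPolyFun L f) {df : (L →L[ℂ] ℂ) → L} (hdf : RepDeriv L f df)
    (x : L →L[ℂ] ℂ) : HasPredualGradientAt f (df x) x := by
  obtain ⟨df', hdf', -⟩ := hf.exists_predualGradient
  exact (hdf' x).hasFDerivAt.differentiableAt.hasFDerivAt.congr_fderiv (by ext v; exact hdf x v)

end IsPolyFun

end PolynomialFunctions

section SemiInvariants

variable {L : Type*} [NormedAddCommGroup L] [NormedSpace ℂ L] {B : L →ₗ[ℂ] L →ₗ[ℂ] L}
  {f g : (L →L[ℂ] ℂ) → ℂ} {χ ψ x : L →L[ℂ] ℂ} {ξ η : L}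

namespace IsSemiInvariant

theorem apply_bracket_gradient (hg : IsSemiInvariant L B g ψ) (hη : HasPredualGradientAt g η x)
    (ξ : L) : x (B ξ η) = ψ ξ * g x := by
  obtain ⟨hpoly, -, dg, hdg, hbracket⟩ := hg
  rw [hη.unique (hpoly.hasPredualGradientAt hdg x), hbracket]

theorem mul_weight_apply_gradient (hB : B.IsAlt) (hf : IsSemiInvariant L B f χ)
    (hg : IsSemiInvariant L B g ψ) (hξ : HasPredualGradientAt f ξ x)
    (hη : HasPredualGradientAt g η x) : f x * χ η = -(g x * ψ ξ) :=
  calc f x * χ η = x (B η ξ) := by rw [hf.apply_bracket_gradient hξ, mul_comm]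
    _ = -x (B ξ η) := by rw [← hB.neg ξ η, map_neg]
    _ = -(g x * ψ ξ) := by rw [hg.apply_bracket_gradient hη, mul_comm]

theorem weight_apply_gradient_self_eq_zero (hB : B.IsAlt) (hf : IsSemiInvariant L B f χ)
    (hξ : HasPredualGradientAt f ξ x) : χ ξ = 0 := by
  obtain ⟨df, hdf, hpoly⟩ := hf.1.exists_predualGradient
  have hmul : (f * fun y => χ (df y)) = 0 := funext fun y =>
    self_eq_neg.1 (hf.mul_weight_apply_gradient hB hf (hdf y) (hdf y))
  rw [hξ.unique (hdf x)]
  exact congrFun (hf.1.eq_zero_of_mul_eq_zero (hpoly χ) hf.2.1 hmul) x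

theorem apply_add_smul_weight (hB : B.IsAlt) (hf : IsSemiInvariant L B f χ) (x : L →L[ℂ] ℂ)
    (t : ℂ) : f (x + t • χ) = f x := by
  obtain ⟨df, hdf, -⟩ := hf.1.exists_predualGradient
  have hderiv (s : ℂ) : HasDerivAt (fun r : ℂ => f (x + r • χ)) 0 s := by
    simpa only [hf.weight_apply_gradient_self_eq_zero hB (hdf _)] using
      (hdf (x + s • χ)).hasDerivAt_line
  simpa [zero_smul ℂ χ] using is_const_of_deriv_eq_zero (fun s => (hderiv s).differentiableAt)
    (fun s => (hderiv s).deriv) t 0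

theorem weight_apply_gradient_eq_zero_of_ne_zero (hB : B.IsAlt) (hf : IsSemiInvariant L B f χ)
    (hg : IsSemiInvariant L B g ψ) (hη : HasPredualGradientAt g η x) (hx : f x ≠ 0) :
    χ η = 0 := by
  obtain ⟨df, hdf, hdf_poly⟩ := hf.1.exists_predualGradient
  obtain ⟨dg, hdg, -⟩ := hg.1.exists_predualGradient
  obtain ⟨G, hG⟩ := hg.1.exists_polynomial_eval_line x χ
  obtain ⟨D, hD⟩ := (hdf_poly ψ).exists_polynomial_eval_line x χ
  have hGD : .C (f x) * G.derivative = -(G * D) := Polynomial.funext fun t => by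
    have hmul := hf.mul_weight_apply_gradient hB hg (hdf (x + t • χ)) (hdg (x + t • χ))
    rw [hf.apply_add_smul_weight hB] at hmul
    simpa [hG, hD, (hdg (x + t • χ)).eval_derivative hG] using hmul
  have hdvd : G ∣ G.derivative := by
    rw [← (Polynomial.isUnit_C.2 hx.isUnit).dvd_mul_left, hGD]
    exact (dvd_mul_right G D).neg_right
  have hG' : G.derivative = 0 := Polynomial.dvd_derivative_iff.1 hdvd
  have hη' : HasPredualGradientAt g η (x + (0 : ℂ) • χ) := by simpa [zero_smul ℂ χ] using hη
  simpa [hG'] using (hη'.eval_derivative hG).symm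

theorem weight_apply_gradient_eq_zero (hB : B.IsAlt) (hf : IsSemiInvariant L B f χ)
    (hg : IsSemiInvariant L B g ψ) (hη : HasPredualGradientAt g η x) : χ η = 0 := by
  obtain ⟨dg, hdg, hpoly⟩ := hg.1.exists_predualGradient
  have hmul : (f * fun y => χ (dg y)) = 0 := funext fun y =>
    mul_eq_zero.2 (or_iff_not_imp_left.2
      (hf.weight_apply_gradient_eq_zero_of_ne_zero hB hg (hdg y)))
  rw [hη.unique (hdg x)]
  exact congrFun (hf.1.eq_zero_of_mul_eq_zero (hpoly χ) hf.2.1 hmul) x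

theorem right_apply_bracket_gradients_eq_zero (hB : B.IsAlt) (hf : IsSemiInvariant L B f χ)
    (hg : IsSemiInvariant L B g ψ) {y z : L →L[ℂ] ℂ} (hξ : HasPredualGradientAt f ξ y)
    (hη : HasPredualGradientAt g η z) : z (B ξ η) = 0 := by
  rw [hg.apply_bracket_gradient hη, hg.weight_apply_gradient_eq_zero hB hf hξ, zero_mul]

theorem left_apply_bracket_gradients_eq_zero (hB : B.IsAlt) (hf : IsSemiInvariant L B f χ)
    (hg : IsSemiInvariant L B g ψ) {y z : L →L[ℂ] ℂ} (hξ : HasPredualGradientAt f ξ y)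
    (hη : HasPredualGradientAt g η z) : y (B ξ η) = 0 := by
  rw [← hB.neg η ξ, map_neg, hg.right_apply_bracket_gradients_eq_zero hB hf hη hξ, neg_zero]

theorem apply_bracket_gradients_eq_zero_on_line (hB : B.IsAlt) (hf : IsSemiInvariant L B f χ)
    (hg : IsSemiInvariant L B g ψ) {a : L →L[ℂ] ℂ} {s t : ℂ}
    (hξ : HasPredualGradientAt f ξ (a + s • x)) (hη : HasPredualGradientAt g η (a + t • x)) :
    x (B ξ η) = 0 ∧ a (B ξ η) = 0 := by
  obtain ⟨dg, hdg, hpoly⟩ := hg.1.exists_predualGradient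
  obtain ⟨P, hP⟩ := (hpoly (x.toLinearMap ∘ₗ B ξ)).exists_polynomial_eval_line a x
  -- The factor `s - r` is cancelled as a polynomial in `r`, so that `s = t` needs no exception.
  have hmul : (.C s - .X) * P = 0 := Polynomial.funext fun r => by
    have hleft := hf.left_apply_bracket_gradients_eq_zero hB hg hξ (hdg (a + r • x))
    have hright := hf.right_apply_bracket_gradients_eq_zero hB hg hξ (hdg (a + r • x))
    simp only [add_apply, smul_apply, smul_eq_mul] at hleft hright
    simp only [Polynomial.eval_mul, Polynomial.eval_sub, Polynomial.eval_C, Polynomial.eval_X, hP,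
      Polynomial.eval_zero, LinearMap.comp_apply, ContinuousLinearMap.coe_coe]
    linear_combination hleft - hright
  have hP0 : P = 0 := (mul_eq_zero.1 hmul).resolve_left fun h =>
    Polynomial.X_sub_C_ne_zero s (sub_eq_zero.1 h ▸ sub_self _)
  have hx : x (B ξ η) = 0 := by
    rw [hη.unique (hdg _)]
    simpa [hP0] using (hP t).symm
  exact ⟨hx, by simpa [hx] using hf.left_apply_bracket_gradients_eq_zero hB hg hξ hη⟩

end IsSemiInvariant

/-- The generators `x ↦ g (a + λ x)`, with `g` a semi-invariant of any weight, of the algebra of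
shifts. -/
def semiInvariantShifts (B : L →ₗ[ℂ] L →ₗ[ℂ] L) (a : L →L[ℂ] ℂ) : Set ((L →L[ℂ] ℂ) → ℂ) :=
  {q | ∃ (g : (L →L[ℂ] ℂ) → ℂ) (χ : L →L[ℂ] ℂ) (lam : ℂ),
    IsSemiInvariant L B g χ ∧ q = fun x => g (a + lam • x)}

variable {a : L →L[ℂ] ℂ} {p q : (L →L[ℂ] ℂ) → ℂ}

theorem isPolyFun_of_mem_adjoin_semiInvariantShifts
    (hp : p ∈ Algebra.adjoin ℂ (semiInvariantShifts B a)) : IsPolyFun L p := by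
  refine Algebra.adjoin_le ?_ hp
  rintro _ ⟨g, χ, t, hg, rfl⟩
  exact hg.1.shift a t

theorem apply_bracket_gradients_eq_zero_of_mem_semiInvariantShifts (hB : B.IsAlt)
    (hp : p ∈ semiInvariantShifts B a) (hq : q ∈ semiInvariantShifts B a)
    (hξ : HasPredualGradientAt p ξ x) (hη : HasPredualGradientAt q η x) :
    x (B ξ η) = 0 ∧ a (B ξ η) = 0 := by
  obtain ⟨f, χ, s, hf, rfl⟩ := hp
  obtain ⟨g, ψ, t, hg, rfl⟩ := hq
  obtain ⟨df, hdf, -⟩ := hf.1.exists_predualGradient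
  obtain ⟨dg, hdg, -⟩ := hg.1.exists_predualGradient
  have hline := hf.apply_bracket_gradients_eq_zero_on_line hB hg (hdf (a + s • x)) (hdg (a + t • x))
  rw [hξ.unique (hdf (a + s • x)).shift, hη.unique (hdg (a + t • x)).shift]
  simp [hline]

theorem algebra_of_shifts_of_semiInvariants_biInvolutive_general (hB : B.IsAlt)
    (hp : p ∈ Algebra.adjoin ℂ (semiInvariantShifts B a))
    (hq : q ∈ Algebra.adjoin ℂ (semiInvariantShifts B a)) {dp dq : (L →L[ℂ] ℂ) → L}
    (hdp : RepDeriv L p dp) (hdq : RepDeriv L q dq) (x : L →L[ℂ] ℂ) :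
    x (B (dp x) (dq x)) = 0 ∧ a (B (dp x) (dq x)) = 0 := by
  have hgrad : ∀ r ∈ semiInvariantShifts B a, ∃ ξ, HasPredualGradientAt r ξ x := fun r hr =>
    have ⟨dr, hdr, _⟩ := (isPolyFun_of_mem_adjoin_semiInvariantShifts
      (Algebra.subset_adjoin hr)).exists_predualGradient
    ⟨dr x, hdr x⟩
  have hdp_span := ((isPolyFun_of_mem_adjoin_semiInvariantShifts hp).hasPredualGradientAt
    hdp x).mem_span_of_mem_adjoin hgrad hp
  have hdq_span := ((isPolyFun_of_mem_adjoin_semiInvariantShifts hq).hasPredualGradientAt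
    hdq x).mem_span_of_mem_adjoin hgrad hq
  have hker : ∀ ξ ∈ {ξ | ∃ r ∈ semiInvariantShifts B a, HasPredualGradientAt r ξ x},
      ∀ η ∈ {η | ∃ r ∈ semiInvariantShifts B a, HasPredualGradientAt r η x},
      B ξ η ∈ LinearMap.ker x.toLinearMap ⊓ LinearMap.ker a.toLinearMap := by
    rintro ξ ⟨r, hr, hξ⟩ η ⟨r', hr', hη⟩
    exact apply_bracket_gradients_eq_zero_of_mem_semiInvariantShifts hB hr hr' hξ hη
  exact LinearMap.BilinMap.apply_apply_mem_of_mem_span _ _ _ B hker _ _ hdp_span hdq_span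

end SemiInvariants

/-- The subalgebra generated by all shifts `x ↦ g(a + λx)` of all semi-invariants `g` of `𝔤`
is commutative w.r.t. both the Lie–Poisson bracket `{p,q}(x) = ⟨x, [dp(x), dq(x)]⟩`
and the frozen argument bracket `{p,q}_a(x) = ⟨a, [dp(x), dq(x)]⟩`. -/
theorem algebra_of_shifts_of_semiInvariants_biInvolutive
    {L : Type*} [NormedAddCommGroup L] [NormedSpace ℂ L] [FiniteDimensional ℂ L]
    (B : L →ₗ[ℂ] L →ₗ[ℂ] L) (hB : IsLieBracket L B)
    (a : L →L[ℂ] ℂ)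
    (A : Subalgebra ℂ ((L →L[ℂ] ℂ) → ℂ))
    (hA : A = Algebra.adjoin ℂ
      {q : (L →L[ℂ] ℂ) → ℂ | ∃ (g : (L →L[ℂ] ℂ) → ℂ) (χ : L →L[ℂ] ℂ) (lam : ℂ),
        IsSemiInvariant L B g χ ∧ q = fun x => g (a + lam • x)}) :
    ∀ p ∈ A, ∀ q ∈ A, ∀ dp dq : (L →L[ℂ] ℂ) → L,
      RepDeriv L p dp → RepDeriv L q dq →
      ∀ x : L →L[ℂ] ℂ, x (B (dp x) (dq x)) = 0 ∧ a (B (dp x) (dq x)) = 0 := by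
  subst hA
  exact fun p hp q hq dp dq hdp hdq x =>
    algebra_of_shifts_of_semiInvariants_biInvolutive_general hB.1 hp hq hdp hdq x
end

section
/- Let 𝔤 be a finite-dimensional complex Lie algebra, let g ∈ S(𝔤) be a semi-invariant with weight χ ∈ 𝔤*, and let a ∈ 𝔤*. Let U ⊆ 𝔤* be open and let λ: U → ℂ be an analytic function satisfying g(x − λ(x)a) = 0 for all x ∈ U. Suppose the set of points x ∈ U at which ⟨a, dg(x − λ(x)a)⟩ ≠ 0 is dense in U. Then for every analytic function h on U and every x ∈ U one has {λ, h}(x) = λ(x)·{λ, h}_a(x). -/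
/-!
Differentiating `g (x - λ x • a) = 0` along `v` at `p = x - λ x • a` gives
`dλ(v) · ⟨a, dg(p)⟩ = ⟨v, dg(p)⟩`. Take `v = p ∘ ad ξ`, the coadjoint vector field of `ξ` at `p`:
it is tangent to the zero set of the semi-invariant `g`, so the right side vanishes, and hence
`⟨p, [ξ, dλ(x)]⟩ = 0` wherever `⟨a, dg(p)⟩ ≠ 0`. By density and continuity this holds on `U`,
and since `p = x - λ x • a` it is the claimed identity.
-/

section RootAlongDirection

variable {𝕜 E F : Type*} [NontriviallyNormedField 𝕜] [NormedAddCommGroup E] [NormedSpace 𝕜 E]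
  [NormedAddCommGroup F] [NormedSpace 𝕜 F] {g : E → F} {lam : E → 𝕜} {a : E}

lemma fderiv_smul_fderiv_eq_of_eventually_root {x : E}
    (hlam : DifferentiableAt 𝕜 lam x) (hg : DifferentiableAt 𝕜 g (x - lam x • a))
    (hroot : ∀ᶠ y in nhds x, g (y - lam y • a) = 0) (v : E) :
    fderiv 𝕜 lam x v • fderiv 𝕜 g (x - lam x • a) a = fderiv 𝕜 g (x - lam x • a) v := by
  have hshift : HasFDerivAt (fun y => y - lam y • a)
      (.id 𝕜 E - (fderiv 𝕜 lam x).smulRight a) x :=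
    (hasFDerivAt_id x).sub (hlam.hasFDerivAt.smul_const a)
  have hzero : HasFDerivAt (fun y => g (y - lam y • a)) (0 : E →L[𝕜] F) x :=
    (hasFDerivAt_const 0 x).congr_of_eventuallyEq hroot
  have hv : fderiv 𝕜 g (x - lam x • a) (v - fderiv 𝕜 lam x v • a) = 0 :=
    DFunLike.congr_fun ((hg.hasFDerivAt.comp x hshift).unique hzero) v
  rw [map_sub, map_smul, sub_eq_zero] at hv
  exact hv.symm

lemma fderiv_root_apply_tangent_eq_zero {V : E → E} (hV : Continuous V)
    (hVg : ∀ p, g p = 0 → fderiv 𝕜 g p (V p) = 0)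
    {U : Set E} (hU : IsOpen U) (hlam : ContDiffOn 𝕜 1 lam U)
    (hroot : ∀ x ∈ U, g (x - lam x • a) = 0)
    (hdense : U ⊆ closure {x ∈ U | fderiv 𝕜 g (x - lam x • a) a ≠ 0}) :
    ∀ x ∈ U, fderiv 𝕜 lam x (V (x - lam x • a)) = 0 := by
  have hcont : ContinuousOn (fun x => fderiv 𝕜 lam x (V (x - lam x • a))) U :=
    (hlam.continuousOn_fderiv_of_isOpen hU le_rfl).clm_apply <|
      hV.comp_continuousOn (continuousOn_id.sub (hlam.continuousOn.smul continuousOn_const))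
  refine Set.EqOn.of_subset_closure ?_ hcont continuousOn_const (Set.sep_subset U _) hdense
  rintro x ⟨hx, hne⟩
  have hg : DifferentiableAt 𝕜 g (x - lam x • a) := by
    by_contra hnot
    exact hne (by rw [fderiv_zero_of_not_differentiableAt hnot, zero_apply])
  have hmul := fderiv_smul_fderiv_eq_of_eventually_root
    ((hlam.differentiableOn one_ne_zero).differentiableAt (hU.mem_nhds hx)) hg
    (Filter.eventually_of_mem (hU.mem_nhds hx) hroot) (V (x - lam x • a))
  exact (smul_eq_zero.mp (hmul.trans (hVg _ (hroot x hx)))).resolve_right hne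

end RootAlongDirection

/-- A bracket `{λ, h}(x)` sees `h` only through `dh(x)`, here an arbitrary `ξ : L`. -/
theorem root_of_semiInvariant_bracket_eq_of_dense_general
    {𝕜 L : Type*} [NontriviallyNormedField 𝕜] [NormedAddCommGroup L] [NormedSpace 𝕜 L]
    (B : L →ₗ[𝕜] L →ₗ[𝕜] L) (hB : B.IsAlt) (hBcont : ∀ ξ, Continuous (B ξ))
    (g : (L →L[𝕜] 𝕜) → 𝕜) (dg : (L →L[𝕜] 𝕜) → L)
    (hdg : ∀ p v : L →L[𝕜] 𝕜, fderiv 𝕜 g p v = v (dg p))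
    (hsemi : ∀ (ξ : L) (p : L →L[𝕜] 𝕜), g p = 0 → p (B ξ (dg p)) = 0)
    (a : L →L[𝕜] 𝕜) (U : Set (L →L[𝕜] 𝕜)) (hU : IsOpen U)
    (lam : (L →L[𝕜] 𝕜) → 𝕜) (hlam : ContDiffOn 𝕜 1 lam U)
    (hroot : ∀ x ∈ U, g (x - lam x • a) = 0)
    (hdense : U ⊆ closure {x ∈ U | a (dg (x - lam x • a)) ≠ 0}) :
    ∀ x ∈ U, ∀ dl : L, (∀ v : L →L[𝕜] 𝕜, fderiv 𝕜 lam x v = v dl) →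
      ∀ ξ : L, x (B dl ξ) = lam x * a (B dl ξ) := by
  intro x hx dl hdl ξ
  let ad : L →L[𝕜] L := ⟨B ξ, hBcont ξ⟩
  have htangent : ∀ p, g p = 0 → fderiv 𝕜 g p (p.comp ad) = 0 :=
    fun p hp => (hdg p _).trans (hsemi ξ p hp)
  have hzero : fderiv 𝕜 lam x ((x - lam x • a).comp ad) = 0 :=
    fderiv_root_apply_tangent_eq_zero (V := fun p => p.comp ad) (by fun_prop)
      htangent hU hlam hroot (by simpa only [hdg] using hdense) x hx
  have hpair : x (B ξ dl) = lam x * a (B ξ dl) := sub_eq_zero.mp ((hdl _).symm.trans hzero)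
  rw [← hB.neg, map_neg, map_neg, hpair, mul_neg]

/-- Lemma on roots of semi-invariants (Lemma 1 of the paper): if `λ : U → ℂ` is analytic
with `g(x − λ(x)a) = 0` on `U`, and the set of points of `U` where
`⟨a, dg(x − λ(x)a)⟩ ≠ 0` is dense in `U`, then for every analytic function `h` on `U`
and every `x ∈ U` one has `{λ, h}(x) = λ(x) · {λ, h}_a(x)`. -/
theorem root_of_semiInvariant_bracket_eq_of_dense
    {L : Type*} [NormedAddCommGroup L] [NormedSpace ℂ L] [FiniteDimensional ℂ L]
    (B : L →ₗ[ℂ] L →ₗ[ℂ] L) (hB : IsLieBracket L B)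
    (g : (L →L[ℂ] ℂ) → ℂ) (χ : L →L[ℂ] ℂ)
    (hpoly : IsPolyFun L g) (hg0 : g ≠ 0)
    (dg : (L →L[ℂ] ℂ) → L) (hdg : RepDeriv L g dg)
    (hsemi : ∀ (ξ : L) (x : L →L[ℂ] ℂ), x (B ξ (dg x)) = χ ξ * g x)
    (a : L →L[ℂ] ℂ)
    (U : Set (L →L[ℂ] ℂ)) (hU : IsOpen U)
    (lam : (L →L[ℂ] ℂ) → ℂ) (hlam : AnalyticOnNhd ℂ lam U)
    (hroot : ∀ x ∈ U, g (x - lam x • a) = 0)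
    (hdense : U ⊆ closure {x ∈ U | a (dg (x - lam x • a)) ≠ 0}) :
    ∀ h : (L →L[ℂ] ℂ) → ℂ, AnalyticOnNhd ℂ h U →
      ∀ x ∈ U, ∀ dl dh : L,
        (∀ v : L →L[ℂ] ℂ, fderiv ℂ lam x v = v dl) →
        (∀ v : L →L[ℂ] ℂ, fderiv ℂ h x v = v dh) →
        x (B dl dh) = lam x * a (B dl dh) :=
  fun _ _ x hx dl dh hdl _ =>
    root_of_semiInvariant_bracket_eq_of_dense_general B hB.1
      (fun ξ => (B ξ).continuous_of_finiteDimensional) g dg hdg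
      (fun ξ p hp => by rw [hsemi, hp, mul_zero])
      a U hU lam (hlam.contDiffOn hU.uniqueDiffOn) hroot hdense x hx dl hdl dh
end

section
/- Let g ∈ ℂ[x₁,…,xₙ] be a nonzero homogeneous polynomial with factorization g = c·h₁^{k₁}⋯h_p^{k_p}, where c ∈ ℂ* and h₁,…,h_p are pairwise non-associated irreducible polynomials, and set d = Σ_{j=1}^p deg h_j. Let a ∈ ℂⁿ be a point with g(a) ≠ 0. Then there exists a nonempty Zariski-open subset U ⊆ ℂⁿ such that for every x ∈ U the set {λ ∈ ℂ : g(x − λa) = 0} has exactly d elements. -/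
/-- A subset of `ℂⁿ` is Zariski-open if its complement is the common zero locus
of a family of polynomials. -/
def IsZariskiOpen {n : ℕ} (U : Set (Fin n → ℂ)) : Prop :=
  ∃ S : Set (MvPolynomial (Fin n) ℂ),
    Uᶜ = {x : Fin n → ℂ | ∀ p ∈ S, MvPolynomial.eval x p = 0}

/-!
Put `q = ∏ h_j`; it is squarefree and has the same zeros as `g`. Since `x ↦ x - λ a` is an
automorphism of `K[x][λ]`, the polynomial `q (x - λ a)` is squarefree in `K[x][λ]`, hence over
`K(x)` by Gauss's lemma, hence separable over `K(x)` because the characteristic is zero. Clearing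
denominators in a Bézout identity between it and its `λ`-derivative leaves a nonzero `r ∈ K[x]`, and
the specialization to a point `x` with `r x ≠ 0` is still separable, so it has as many roots as its
degree. That degree is `∑ deg h_j`: the coefficient of `λ ^ deg g` in `g (x - λ a)` is, up to sign,
the leading form of `g` at `a`, so `g`, and with it every divisor of `g`, keeps its degree on the
line.
-/

section Squarefree

open Polynomial nonZeroDivisors

theorem squarefree_map_mulEquiv {M N : Type*} [CommMonoid M] [CommMonoid N] (e : M ≃* N) {x : M}
    (hx : Squarefree x) : Squarefree (e x) := fun d hd => by
  have hsymm : e.symm d * e.symm d ∣ x := by simpa using map_dvd e.symm hd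
  exact (MulEquiv.isUnit_map e.symm).mp (hx _ hsymm)

variable {R : Type*} [CommRing R] [IsDomain R]

theorem squarefree_polynomial_C {r : R} (hr : Squarefree r) : Squarefree (C r) := fun d hd => by
  have hdeg : d.natDegree = 0 := Nat.le_zero.mp <|
    (natDegree_le_of_dvd (dvd_of_mul_left_dvd hd) (C_ne_zero.mpr hr.ne_zero)).trans
      (natDegree_C r).le
  obtain ⟨s, rfl⟩ := natDegree_eq_zero.mp hdeg
  exact isUnit_C.mpr (hr s (by simpa using map_dvd constantCoeff hd))

theorem squarefree_prod_of_irreducible {M ι : Type*} [CommMonoidWithZero M] [IsCancelMulZero M]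
    [DecompositionMonoid M] {s : Finset ι} {f : ι → M} (hirr : ∀ i ∈ s, Irreducible (f i))
    (hassoc : ∀ i ∈ s, ∀ j ∈ s, i ≠ j → ¬ Associated (f i) (f j)) :
    Squarefree (∏ i ∈ s, f i) :=
  Finset.squarefree_prod_of_pairwise_isCoprime
    (fun i hi j hj hij => (hirr i hi).isRelPrime_iff_not_dvd.mpr fun hdvd =>
      hassoc i hi j hj hij ((hirr i hi).associated_of_dvd (hirr j hj) hdvd))
    fun i hi => (hirr i hi).squarefree

variable (K : Type*) [Field K] [Algebra R K] [IsFractionRing R K]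

theorem exists_isPrimitive_associated_map [IsGCDMonoid R] {P : K[X]} (hP : P ≠ 0) :
    ∃ p : R[X], p.IsPrimitive ∧ Associated (p.map (algebraMap R K)) P := by
  have := Classical.arbitrary (NormalizedGCDMonoid R)
  let N := IsLocalization.integerNormalization R⁰ P
  obtain ⟨s, hs, hN⟩ := IsLocalization.integerNormalization_spec R⁰ P
  rw [← IsScalarTower.algebraMap_smul K, smul_eq_C_mul] at hN
  have hN0 : N ≠ 0 := mt IsFractionRing.integerNormalization_eq_zero_iff.mp hP
  have isUnit_C_map {r : R} (hr : r ≠ 0) : IsUnit (C (algebraMap R K r)) :=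
    isUnit_C.mpr (IsUnit.mk0 _ ((map_ne_zero_iff _ (IsFractionRing.injective R K)).mpr hr))
  refine ⟨N.primPart, N.isPrimitive_primPart, ?_⟩
  calc
    Associated (N.primPart.map (algebraMap R K))
        (C (algebraMap R K N.content) * N.primPart.map (algebraMap R K)) :=
      associated_unit_mul_right _ _ (isUnit_C_map (mt content_eq_zero_iff.mp hN0))
    _ = C (algebraMap R K s) * P := by
      rw [← map_C, ← Polynomial.map_mul, ← eq_C_content_mul_primPart, hN]
    Associated _ P := associated_unit_mul_left _ _ (isUnit_C_map (nonZeroDivisors.ne_zero hs))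

theorem squarefree_map_fractionRing [IsGCDMonoid R] {F : R[X]} (hF : Squarefree F) :
    Squarefree (F.map (algebraMap R K)) := fun P hP => by
  have hF0 : F.map (algebraMap R K) ≠ 0 :=
    (Polynomial.map_ne_zero_iff (IsFractionRing.injective R K)).mpr hF.ne_zero
  have hP0 : P ≠ 0 := by
    rintro rfl
    exact hF0 (by simpa using hP)
  obtain ⟨p, hp, hpP⟩ := exists_isPrimitive_associated_map (R := R) K hP0
  have := Classical.arbitrary (NormalizedGCDMonoid R)
  have hpF : p * p ∣ F := by
    refine (hp.mul hp).dvd_of_fraction_map_dvd_fraction_map (K := K) ?_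
    rw [Polynomial.map_mul]
    exact (hpP.mul_mul hpP).dvd.trans hP
  exact hpP.isUnit ((hF p hpF).map (mapRingHom (algebraMap R K)))

end Squarefree

section Separable

open Polynomial nonZeroDivisors

variable {R : Type*} [CommRing R] [IsDomain R]

theorem exists_bezout_of_isCoprime_map (K : Type*) [Field K] [Algebra R K] [IsFractionRing R K]
    {F G : R[X]} (hFG : IsCoprime (F.map (algebraMap R K)) (G.map (algebraMap R K))) :
    ∃ r : R, r ≠ 0 ∧ ∃ A B : R[X], A * F + B * G = C r := by
  obtain ⟨A, B, hAB⟩ := hFG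
  obtain ⟨s, hs, hA⟩ := IsLocalization.integerNormalization_spec R⁰ A
  obtain ⟨t, ht, hB⟩ := IsLocalization.integerNormalization_spec R⁰ B
  rw [← IsScalarTower.algebraMap_smul K, smul_eq_C_mul] at hA hB
  refine ⟨s * t, mul_ne_zero (nonZeroDivisors.ne_zero hs) (nonZeroDivisors.ne_zero ht),
    C t * IsLocalization.integerNormalization R⁰ A,
    C s * IsLocalization.integerNormalization R⁰ B, ?_⟩
  apply map_injective (algebraMap R K) (IsFractionRing.injective R K)
  simp only [Polynomial.map_add, Polynomial.map_mul, map_C, hA, hB, map_mul]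
  linear_combination C (algebraMap R K s) * C (algebraMap R K t) * hAB

theorem separable_map_of_bezout {S T : Type*} [CommRing S] [CommRing T] {F A B : S[X]} {r : S}
    (hAB : A * F + B * derivative F = C r) (φ : S →+* T) (hr : IsUnit (φ r)) :
    (F.map φ).Separable := by
  obtain ⟨u, hu⟩ := hr.exists_left_inv
  have hmap := congrArg (Polynomial.map φ) hAB
  simp only [Polynomial.map_add, Polynomial.map_mul, ← derivative_map, map_C] at hmap
  refine ⟨C u * A.map φ, C u * B.map φ, ?_⟩
  rw [mul_assoc, mul_assoc, ← mul_add, hmap, ← C_mul, hu, C_1]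

theorem exists_ne_zero_forall_separable_map [CharZero R] [IsGCDMonoid R] {F : R[X]}
    (hF : Squarefree F) :
    ∃ r : R, r ≠ 0 ∧ ∀ {T : Type*} [CommRing T] (φ : R →+* T), IsUnit (φ r) →
      (F.map φ).Separable := by
  have : CharZero (FractionRing R) := IsFractionRing.charZero_of_isFractionRing R
  have hsep : (F.map (algebraMap R (FractionRing R))).Separable :=
    PerfectField.separable_iff_squarefree.mpr (squarefree_map_fractionRing _ hF)
  rw [Separable, derivative_map] at hsep
  obtain ⟨r, hr, A, B, hAB⟩ := exists_bezout_of_isCoprime_map _ hsep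
  exact ⟨r, hr, fun φ => separable_map_of_bezout hAB φ⟩

theorem ncard_rootSet_of_separable {K : Type*} [Field K] [IsAlgClosed K] {f : K[X]}
    (hf : f.Separable) : (f.rootSet K).ncard = f.natDegree := by
  rw [← Nat.card_coe_set_eq, Nat.card_eq_fintype_card,
    card_rootSet_eq_natDegree hf (IsAlgClosed.splits _)]

end Separable

section RestrictLine

open MvPolynomial
open scoped Polynomial

variable {σ R A B : Type*} [CommRing R] [CommRing A] [Algebra R A] [CommRing B] [Algebra R B]

/-- The restriction `λ ↦ h (x - λ a)` of a polynomial `h` to the line through `x` in direction `a`.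
The coordinates of `x` and `a` may lie in any `R`-algebra: taking the indeterminates for those of
`x` gives the restriction to a generic line. -/
noncomputable def restrictLine (x a : σ → A) : MvPolynomial σ R →ₐ[R] A[X] :=
  aeval fun i => Polynomial.C (x i) - Polynomial.C (a i) * Polynomial.X

theorem eval_restrictLine (x a : σ → A) (h : MvPolynomial σ R) (t : A) :
    (restrictLine x a h).eval t = aeval (x - t • a) h := by
  have hcomp : ((Polynomial.aeval t).restrictScalars R).comp (restrictLine x a) =
      aeval (R := R) (x - t • a) := by
    ext i
    simp [restrictLine, mul_comm t]
  simpa [Polynomial.coe_aeval_eq_eval] using DFunLike.congr_fun hcomp h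

theorem map_restrictLine (x a : σ → A) (φ : A →ₐ[R] B) (h : MvPolynomial σ R) :
    (restrictLine x a h).map φ = restrictLine (φ ∘ x) (φ ∘ a) h := by
  have hcomp : (Polynomial.mapAlgHom φ).comp (restrictLine x a) =
      restrictLine (R := R) (φ ∘ x) (φ ∘ a) := by
    ext i
    simp [restrictLine]
  exact DFunLike.congr_fun hcomp h

end RestrictLine

section Degree

open MvPolynomial
open scoped Polynomial

variable {σ R A : Type*} [CommRing R] [CommRing A] [Algebra R A]

theorem natDegree_C_sub_C_mul_X_le (u v : A) :
    (Polynomial.C u - Polynomial.C v * Polynomial.X).natDegree ≤ 1 := by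
  compute_degree

theorem natDegree_restrictLine_le (x a : σ → A) (h : MvPolynomial σ R) :
    (restrictLine x a h).natDegree ≤ h.totalDegree := by
  rw [restrictLine, ← aeval_map_algebraMap A, ← mul_one h.totalDegree]
  exact aeval_natDegree_le _ (Finset.sup_mono (support_map_subset _ _)) _
    fun i => natDegree_C_sub_C_mul_X_le (x i) (a i)

theorem prod_map_toMultiset {M : Type*} [CommMonoid M] (e : σ →₀ ℕ) (f : σ → M) :
    (e.toMultiset.map f).prod = e.prod fun i k => f i ^ k := by
  rw [Finsupp.toMultiset_map, Finsupp.prod_toMultiset,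
    Finsupp.prod_mapDomain_index pow_zero pow_add]

theorem coeff_restrictLine_monomial (x a : σ → A) (e : σ →₀ ℕ) (r : R) :
    (restrictLine x a (monomial e r)).coeff e.degree =
      (-1) ^ e.degree * aeval a (monomial e r) := by
  let factors : Multiset A[X] :=
    e.toMultiset.map fun i => Polynomial.C (x i) - Polynomial.C (a i) * Polynomial.X
  have hcard : Multiset.card e.toMultiset = e.degree := Finsupp.card_toMultiset e
  have hfactors : factors.prod.coeff e.degree = (-1) ^ e.degree * (e.toMultiset.map a).prod := by
    have hle : ∀ f ∈ factors, f.natDegree ≤ 1 := by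
      simpa [factors] using fun i _ => natDegree_C_sub_C_mul_X_le (x i) (a i)
    have hcoeff := Polynomial.coeff_multiset_prod_of_natDegree_le factors 1 hle
    have hneg := Multiset.prod_map_neg (e.toMultiset.map a)
    rw [Multiset.map_map, Multiset.card_map, hcard] at hneg
    simpa [factors, hcard, Polynomial.coeff_C, ← hneg] using hcoeff
  rw [restrictLine, aeval_monomial, aeval_monomial, ← prod_map_toMultiset, ← prod_map_toMultiset,
    Polynomial.algebraMap_apply, Polynomial.coeff_C_mul, hfactors, mul_left_comm]

theorem coeff_restrictLine_totalDegree (x a : σ → A) (h : MvPolynomial σ R) :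
    (restrictLine x a h).coeff h.totalDegree =
      (-1) ^ h.totalDegree * aeval a (homogeneousComponent h.totalDegree h) := by
  conv_lhs => enter [1]; rw [h.as_sum]
  rw [map_sum, Polynomial.finsetSum_coeff, homogeneousComponent_apply, map_sum, Finset.mul_sum,
    Finset.sum_filter]
  refine Finset.sum_congr rfl fun e he => ?_
  split_ifs with hdeg
  · rw [← hdeg, coeff_restrictLine_monomial]
  · refine Polynomial.coeff_eq_zero_of_natDegree_lt ?_
    calc
      (restrictLine x a (monomial e (h.coeff e))).natDegree
        ≤ (monomial e (h.coeff e)).totalDegree := natDegree_restrictLine_le x a _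
      _ ≤ e.degree := totalDegree_monomial_le _ _
      _ < h.totalDegree := lt_of_le_of_ne (le_totalDegree he) hdeg

variable [IsDomain R]

theorem natDegree_restrictLine_of_dvd {x a : σ → A} {f g : MvPolynomial σ R} (hfg : f ∣ g)
    (hg : aeval a (homogeneousComponent g.totalDegree g) ≠ 0) :
    (restrictLine x a f).natDegree = f.totalDegree := by
  obtain ⟨q, rfl⟩ := hfg
  have hcoeff : (restrictLine x a (f * q)).coeff (f * q).totalDegree ≠ 0 := by
    rwa [coeff_restrictLine_totalDegree, Ne, (isUnit_neg_one.pow _).mul_right_eq_zero]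
  have hfq : f * q ≠ 0 := fun h0 => hcoeff (by simp [h0])
  have hle : f.totalDegree + q.totalDegree ≤
      (restrictLine x a f).natDegree + (restrictLine x a q).natDegree := by
    rw [← totalDegree_mul_of_isDomain (left_ne_zero_of_mul hfq) (right_ne_zero_of_mul hfq)]
    refine (Polynomial.le_natDegree_of_ne_zero hcoeff).trans ?_
    rw [map_mul]
    exact Polynomial.natDegree_mul_le
  have hf := natDegree_restrictLine_le x a f
  have hq := natDegree_restrictLine_le x a q
  omega

theorem totalDegree_prod_of_isDomain {ι : Type*} (s : Finset ι) {f : ι → MvPolynomial σ R}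
    (hf : ∀ i ∈ s, f i ≠ 0) : (∏ i ∈ s, f i).totalDegree = ∑ i ∈ s, (f i).totalDegree := by
  induction s using Finset.cons_induction with
  | empty => simp
  | cons i s hi ih =>
    rw [Finset.forall_mem_cons] at hf
    rw [Finset.prod_cons, Finset.sum_cons,
      totalDegree_mul_of_isDomain hf.1 (Finset.prod_ne_zero_iff.mpr hf.2), ih hf.2]

end Degree

section GenericLine

open MvPolynomial
open scoped Polynomial

variable {σ R : Type*} [CommRing R]

/-- The substitution `x ↦ x - λ a`, `λ ↦ λ` on polynomials in `λ` with coefficients in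
`R[x]`. -/
noncomputable def shiftHom (a : σ → R) : (MvPolynomial σ R)[X] →ₐ[R] (MvPolynomial σ R)[X] :=
  Polynomial.eval₂AlgHom (restrictLine X (C ∘ a)) Polynomial.X fun _ => Commute.all _ _

theorem shiftHom_C (a : σ → R) (h : MvPolynomial σ R) :
    shiftHom a (Polynomial.C h) = restrictLine X (C ∘ a) h :=
  Polynomial.eval₂_C _ _

theorem shiftHom_X (a : σ → R) : shiftHom a Polynomial.X = Polynomial.X :=
  Polynomial.eval₂_X _ _

theorem shiftHom_comp_shiftHom_neg (a : σ → R) :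
    (shiftHom a).comp (shiftHom (-a)) = AlgHom.id R _ := by
  have hC (r : R) : shiftHom a (Polynomial.C (C r)) = Polynomial.C (C r) := (shiftHom a).commutes r
  refine Polynomial.algHom_ext' (MvPolynomial.algHom_ext fun i => ?_) ?_
  · simp [shiftHom_C, shiftHom_X, restrictLine, hC]
  · simp [shiftHom_X]

/-- The automorphism `x ↦ x - λ a`, `λ ↦ λ` of the polynomial ring in `x` and `λ`. -/
noncomputable def shiftEquiv (a : σ → R) : (MvPolynomial σ R)[X] ≃ₐ[R] (MvPolynomial σ R)[X] :=
  AlgEquiv.ofAlgHom (shiftHom a) (shiftHom (-a)) (shiftHom_comp_shiftHom_neg a)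
    (by simpa using shiftHom_comp_shiftHom_neg (-a))

theorem squarefree_restrictLine_X [IsDomain R] (a : σ → R) {q : MvPolynomial σ R}
    (hq : Squarefree q) : Squarefree (restrictLine X (C ∘ a) q) := by
  rw [← shiftHom_C]
  exact squarefree_map_mulEquiv (shiftEquiv a).toMulEquiv (squarefree_polynomial_C hq)

theorem map_eval_restrictLine_X (x a : σ → R) (h : MvPolynomial σ R) :
    (restrictLine X (C ∘ a) h).map (eval x) = restrictLine x a h := by
  let φ : MvPolynomial σ R →ₐ[R] R := aeval x
  have hX : φ ∘ X = x := funext fun i => by simp [φ]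
  have hC : φ ∘ C ∘ a = a := funext fun i => by simp [φ]
  have hφ : (φ : MvPolynomial σ R →+* R) = eval x := coe_aeval_eq_eval x
  rw [← hφ, map_restrictLine, hX, hC]

theorem exists_ne_zero_forall_separable_restrictLine {K : Type*} [Field K] [CharZero K]
    (a : σ → K) {q : MvPolynomial σ K} (hq : Squarefree q) :
    ∃ r : MvPolynomial σ K, r ≠ 0 ∧ ∀ x, eval x r ≠ 0 → (restrictLine x a q).Separable := by
  obtain ⟨r, hr, hsep⟩ := exists_ne_zero_forall_separable_map (squarefree_restrictLine_X a hq)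
  refine ⟨r, hr, fun x hx => ?_⟩
  rw [← map_eval_restrictLine_X]
  exact hsep (eval x) hx.isUnit

end GenericLine

theorem roots_of_shifted_homogeneous_polynomial_general {σ ι K : Type*} [Fintype ι] [Field K]
    [IsAlgClosed K] [CharZero K] {g : MvPolynomial σ K} {c : K} (hc : c ≠ 0)
    {h : ι → MvPolynomial σ K} {k : ι → ℕ} (hk : ∀ j, 0 < k j) (hirr : ∀ j, Irreducible (h j))
    (hassoc : ∀ i j, i ≠ j → ¬ Associated (h i) (h j))
    (hfact : g = MvPolynomial.C c * ∏ j, h j ^ k j) {a : σ → K}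
    (ha : MvPolynomial.eval a (MvPolynomial.homogeneousComponent g.totalDegree g) ≠ 0) :
    ∃ r : MvPolynomial σ K, r ≠ 0 ∧ ∀ x, MvPolynomial.eval x r ≠ 0 →
      {lam : K | MvPolynomial.eval (x - lam • a) g = 0}.Finite ∧
      {lam : K | MvPolynomial.eval (x - lam • a) g = 0}.ncard = ∑ j, (h j).totalDegree := by
  have hsq : Squarefree (∏ j, h j) :=
    squarefree_prod_of_irreducible (fun j _ => hirr j) fun i _ j _ => hassoc i j
  have hdvd : ∏ j, h j ∣ g := hfact ▸
    (Finset.prod_dvd_prod_of_dvd _ _ fun j _ => dvd_pow_self _ (hk j).ne').mul_left _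
  obtain ⟨r, hr, hsep⟩ := exists_ne_zero_forall_separable_restrictLine a hsq
  refine ⟨r, hr, fun x hx => ?_⟩
  have hroots : {lam : K | MvPolynomial.eval (x - lam • a) g = 0} =
      (restrictLine x a (∏ j, h j)).rootSet K := by
    ext t
    rw [Polynomial.mem_rootSet_of_ne (hsep x hx).ne_zero]
    simp [Polynomial.coe_aeval_eq_eval, eval_restrictLine, hfact, hc, Finset.prod_eq_zero_iff,
      (hk _).ne']
  rw [hroots, ncard_rootSet_of_separable (hsep x hx), natDegree_restrictLine_of_dvd hdvd ha,
    totalDegree_prod_of_isDomain _ fun j _ => (hirr j).ne_zero]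
  exact ⟨Polynomial.rootSet_finite _ _, rfl⟩

theorem isZariskiOpen_setOf_eval_ne_zero {n : ℕ} (r : MvPolynomial (Fin n) ℂ) :
    IsZariskiOpen {x | MvPolynomial.eval x r ≠ 0} :=
  ⟨{r}, by ext x; simp⟩

theorem exists_eval_ne_zero {σ R : Type*} [CommRing R] [IsDomain R] [Infinite R]
    {r : MvPolynomial σ R} (hr : r ≠ 0) : ∃ x, MvPolynomial.eval x r ≠ 0 := by
  contrapose! hr
  exact MvPolynomial.funext fun x => by simp [hr x]

/-- For a nonzero homogeneous `g = c · h₁^{k₁} ⋯ h_p^{k_p}` with the `hⱼ` irreducible and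
pairwise non-associated, and a point `a` with `g(a) ≠ 0`, there is a nonempty Zariski-open
set `U` such that for every `x ∈ U` the equation `g(x − λa) = 0` has exactly
`d = Σ deg hⱼ` distinct roots `λ ∈ ℂ`. -/
theorem roots_of_shifted_homogeneous_polynomial
    {n : ℕ} (g : MvPolynomial (Fin n) ℂ) (hg0 : g ≠ 0)
    (m : ℕ) (hhom : g.IsHomogeneous m)
    (c : ℂ) (hc : c ≠ 0)
    (p : ℕ) (h : Fin p → MvPolynomial (Fin n) ℂ)
    (k : Fin p → ℕ) (hk : ∀ j, 0 < k j)
    (hirr : ∀ j, Irreducible (h j))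
    (hassoc : ∀ i j, i ≠ j → ¬ Associated (h i) (h j))
    (hfact : g = MvPolynomial.C c * ∏ j, h j ^ k j)
    (d : ℕ) (hd : d = ∑ j, (h j).totalDegree)
    (a : Fin n → ℂ) (ha : MvPolynomial.eval a g ≠ 0) :
    ∃ U : Set (Fin n → ℂ), IsZariskiOpen U ∧ U.Nonempty ∧
      ∀ x ∈ U,
        {lam : ℂ | MvPolynomial.eval (x - lam • a) g = 0}.Finite ∧
        {lam : ℂ | MvPolynomial.eval (x - lam • a) g = 0}.ncard = d := by
  rw [← MvPolynomial.homogeneousComponent_eq_self hhom, ← hhom.totalDegree hg0] at ha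
  obtain ⟨r, hr, hroots⟩ :=
    roots_of_shifted_homogeneous_polynomial_general hc hk hirr hassoc hfact ha
  exact ⟨_, isZariskiOpen_setOf_eval_ne_zero r, exists_eval_ne_zero hr, hd ▸ hroots⟩
end

section
/- Let g ∈ ℂ[x₁,…,xₙ] be a homogeneous polynomial of degree m and a ∈ ℂⁿ a point with g(a) ≠ 0. Let U ⊆ ℂⁿ be an open subset (in the Euclidean topology), let λ₁,…,λ_d : U → ℂ be analytic functions that are pairwise distinct at every point of U, and let s₁,…,s_d be positive integers with s₁+⋯+s_d = m, such that g(x − λa) = g(a)·∏_{i=1}^d (λᵢ(x) − λ)^{sᵢ} for all x ∈ U and all λ ∈ ℂ. Define polynomials g₀,…,g_m ∈ ℂ[x₁,…,xₙ] by g(a + λx) = Σ_{j=0}^m g_j(x)λʲ. Then for every x ∈ U the ℂ-linear span of the gradients {∇λ₁(x),…,∇λ_d(x)} equals the ℂ-linear span of the gradients {∇g₁(x),…,∇g_m(x)} in ℂⁿ. -/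
/-!
By homogeneity, `g (y + t • a) = ∑ⱼ gⱼ(y) t ^ (m - j)`, so near `x`
`∑ⱼ gⱼ(y) X ^ (m - j) = g(a) ∏ᵢ (X + λᵢ(y)) ^ sᵢ`.
Differentiating this identity at `x` expresses each `∇gⱼ(x)` as the combination of the `∇λᵢ(x)`
whose coefficients are those of `X ^ (m - j)` in the polynomials
`Wᵢ = g(a) sᵢ (X + λᵢ(x)) ^ (sᵢ - 1) ∏_{k ≠ i} (X + λₖ(x)) ^ sₖ`. All the `Wᵢ` have degree less
than `m`, and they are linearly independent: `(X + λᵢ(x)) ^ sᵢ` divides every `Wₖ` with `k ≠ i` but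
not `Wᵢ`. So the coefficient matrix has linearly independent rows, and the two spans agree.
-/

open Polynomial Filter Topology

section LinearAlgebra

variable {K ι : Type*} [Field K]

theorem span_range_sum_smul_eq_of_linearIndependent {V κ : Type*} [Fintype ι] [AddCommGroup V]
    [Module K V] {M : ι → κ → K} (hM : LinearIndependent K M) (u : ι → V) :
    Submodule.span K (Set.range fun j => ∑ i, M i j • u i) =
      Submodule.span K (Set.range u) := by
  calc Submodule.span K (Set.range (Fintype.linearCombination K u ∘ flip M))
      = (Submodule.span K (Set.range (flip M))).map (Fintype.linearCombination K u) := by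
        rw [Set.range_comp, Submodule.map_span]
    _ = (⊤ : Submodule K (ι → K)).map (Fintype.linearCombination K u) := by
        rw [span_flip_eq_top_iff_linearIndependent.2 hM]
    _ = Submodule.span K (Set.range u) := by
        rw [Submodule.map_top, Fintype.range_linearCombination]

theorem linearIndependent_coeff_of_natDegree_lt {m : ℕ} {P : ι → K[X]}
    (hP : LinearIndependent K P) (hdeg : ∀ i, (P i).natDegree < m) :
    LinearIndependent K fun i (j : Fin m) => (P i).coeff j := by
  rw [linearIndependent_iff'] at hP ⊢
  intro S c hc
  refine hP S c (Polynomial.ext fun j => ?_)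
  simp only [finsetSum_coeff, coeff_smul, coeff_zero]
  by_cases hj : j < m
  · simpa using congrFun hc ⟨j, hj⟩
  · exact Finset.sum_eq_zero fun i _ => by
      rw [coeff_eq_zero_of_natDegree_lt ((hdeg i).trans_le (not_lt.1 hj)), smul_zero]

theorem linearIndependent_mul_prod_erase [Fintype ι] [DecidableEq ι] {p q : ι → K[X]}
    (hp : Pairwise fun i j => IsCoprime (p i) (p j)) (hpq : ∀ i, ¬ p i ∣ q i) :
    LinearIndependent K fun i => q i * ∏ k ∈ Finset.univ.erase i, p k := by
  rw [Fintype.linearIndependent_iff]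
  intro c hc i
  have hdvd_others : p i ∣ ∑ j ∈ Finset.univ.erase i,
      c j • (q j * ∏ k ∈ Finset.univ.erase j, p k) :=
    Finset.dvd_sum fun j hj => dvd_smul_of_dvd _ <| dvd_mul_of_dvd_right
      (Finset.dvd_prod_of_mem p (by simpa using (Finset.ne_of_mem_erase hj).symm)) _
  have hdvd : p i ∣ (c i • q i) * ∏ k ∈ Finset.univ.erase i, p k := by
    rw [← Finset.add_sum_erase _ _ (Finset.mem_univ i)] at hc
    rw [smul_mul_assoc, eq_neg_of_add_eq_zero_left hc]
    exact hdvd_others.neg_right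
  have hcoprime : IsCoprime (p i) (∏ k ∈ Finset.univ.erase i, p k) :=
    IsCoprime.prod_right fun k hk => hp (Finset.ne_of_mem_erase hk).symm
  by_contra hci
  refine hpq i ?_
  simpa [smul_smul, hci] using dvd_smul_of_dvd (c i)⁻¹ (hcoprime.dvd_of_dvd_mul_right hdvd)

end LinearAlgebra

section RootJacobian

variable {K ι : Type*}

theorem natDegree_prod_X_add_C_pow [CommSemiring K] [Nontrivial K] (t : Finset ι) (r : ι → K)
    (s : ι → ℕ) : (∏ k ∈ t, (X + C (r k)) ^ s k).natDegree = ∑ k ∈ t, s k := by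
  simp [natDegree_prod_of_monic _ _ fun k _ => (monic_X_add_C (r k)).pow (s k),
    natDegree_pow_X_add_C]

variable [Fintype ι] [DecidableEq ι]

/-- The partial derivative of `∏ k, (X + C (r k)) ^ s k` with respect to the parameter `r i`. Its
coefficients are the `i`-th row of the Jacobian matrix of the coefficients of the product. -/
noncomputable def rootJacobian [CommSemiring K] (r : ι → K) (s : ι → ℕ) (i : ι) : K[X] :=
  derivative ((X + C (r i)) ^ s i) * ∏ k ∈ Finset.univ.erase i, (X + C (r k)) ^ s k

theorem natDegree_rootJacobian_lt [CommSemiring K] [Nontrivial K] (r : ι → K) {s : ι → ℕ} {i : ι}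
    (hs : s i ≠ 0) : (rootJacobian r s i).natDegree < ∑ k, s k := by
  have hderiv : (derivative ((X + C (r i)) ^ s i)).natDegree < s i :=
    (natDegree_derivative_lt (by rwa [natDegree_pow_X_add_C])).trans_eq
      (natDegree_pow_X_add_C _ _)
  calc (rootJacobian r s i).natDegree
      ≤ (derivative ((X + C (r i)) ^ s i)).natDegree + ∑ k ∈ Finset.univ.erase i, s k :=
        natDegree_mul_le.trans_eq (by rw [natDegree_prod_X_add_C_pow])
    _ < s i + ∑ k ∈ Finset.univ.erase i, s k := by gcongr
    _ = ∑ k, s k := Finset.add_sum_erase _ _ (Finset.mem_univ i)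

theorem linearIndependent_rootJacobian [Field K] {r : ι → K} (hr : Function.Injective r)
    {s : ι → ℕ} (hs : ∀ i, (s i : K) ≠ 0) : LinearIndependent K (rootJacobian r s) := by
  refine linearIndependent_mul_prod_erase (fun i j hij => ?_) fun i => ?_
  · have hcoprime := pairwise_coprime_X_sub_C (neg_injective.comp hr) hij
    simp only [Function.comp_apply, C_neg, sub_neg_eq_add] at hcoprime
    exact hcoprime.pow
  · have hsi : s i ≠ 0 := fun h => hs i (by simp [h])
    refine ((monic_X_add_C (r i)).pow (s i)).not_dvd_of_natDegree_lt ?_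
      (natDegree_derivative_lt (by rwa [natDegree_pow_X_add_C]))
    rw [derivative_X_add_C_pow]
    exact mul_ne_zero (by exact_mod_cast C_ne_zero.2 (hs i)) (pow_ne_zero _ (X_add_C_ne_zero _))

end RootJacobian

section Derivative

variable {𝕜 E ι : Type*} [NontriviallyNormedField 𝕜] [NormedAddCommGroup E] [NormedSpace 𝕜 E]
  [Fintype ι] {f : ι → E → 𝕜} {f' : ι → E →L[𝕜] 𝕜} {x : E}

theorem hasFDerivAt_eval_prod_X_add_C_pow [DecidableEq ι] (hf : ∀ i, HasFDerivAt (f i) (f' i) x)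
    (s : ι → ℕ) (t : 𝕜) :
    HasFDerivAt (fun y => (∏ i, (X + C (f i y)) ^ s i).eval t)
      (∑ i, (rootJacobian (fun k => f k x) s i).eval t • f' i) x := by
  have hfactor (i : ι) : HasFDerivAt (fun y => (t + f i y) ^ s i)
      ((s i • (t + f i x) ^ (s i - 1)) • f' i) x :=
    ((hf i).const_add t).pow (s i)
  simp only [eval_prod, eval_pow, eval_add, eval_X, eval_C]
  refine (HasFDerivAt.finsetProd fun i _ => hfactor i).congr_fderiv
    (Finset.sum_congr rfl fun i _ => ?_)
  simp [rootJacobian, eval_prod, derivative_X_add_C_pow, smul_smul, mul_comm]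

variable {s : ι → ℕ} {m : ℕ} {A : 𝕜} {c : ℕ → E → 𝕜} {c' : ℕ → E →L[𝕜] 𝕜}

theorem fderiv_coeff_eq_sum_rootJacobian [DecidableEq ι]
    (hf : ∀ i, HasFDerivAt (f i) (f' i) x) (hc : ∀ k, HasFDerivAt (c k) (c' k) x)
    (h : ∀ᶠ y in 𝓝 x, ∑ k ∈ Finset.range (m + 1), C (c k y) * X ^ k =
      C A * ∏ i, (X + C (f i y)) ^ s i) {k : ℕ} (hk : k ≤ m) :
    c' k = ∑ i, (A • rootJacobian (fun j => f j x) s i).coeff k • f' i := by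
  have hderiv (t : 𝕜) : ∑ k ∈ Finset.range (m + 1), t ^ k • c' k =
      ∑ i, (A • rootJacobian (fun j => f j x) s i).eval t • f' i := by
    have hleft : HasFDerivAt (fun y => ∑ k ∈ Finset.range (m + 1), c k y * t ^ k)
        (∑ k ∈ Finset.range (m + 1), t ^ k • c' k) x :=
      HasFDerivAt.fun_sum fun k _ => (hc k).mul_const (t ^ k)
    have hright := (hasFDerivAt_eval_prod_X_add_C_pow hf s t).const_mul A
    simp only [Finset.smul_sum, ← smul_assoc, ← eval_smul] at hright
    refine hleft.unique (hright.congr_of_eventuallyEq ?_)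
    filter_upwards [h] with y hy
    simpa [eval_finsetSum] using congrArg (eval t) hy
  ext v
  have hpoly : ∑ k ∈ Finset.range (m + 1), C (c' k v) * X ^ k =
      ∑ i, (A • rootJacobian (fun j => f j x) s i) * C (f' i v) := by
    refine Polynomial.funext fun t => ?_
    simpa [eval_finsetSum, mul_assoc, mul_comm (t ^ _)] using
      congrArg (fun L : E →L[𝕜] 𝕜 => L v) (hderiv t)
  simpa [finsetSum_coeff, coeff_X_pow, Nat.lt_succ_of_le hk, mul_assoc] using
    congrArg (fun p => coeff p k) hpoly

theorem span_fderiv_coeff_eq_span_fderiv_roots (hf : ∀ i, HasFDerivAt (f i) (f' i) x)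
    (hc : ∀ k, HasFDerivAt (c k) (c' k) x) (hinj : Function.Injective fun i => f i x)
    (hs : ∀ i, (s i : 𝕜) ≠ 0) (hA : A ≠ 0)
    (h : ∀ᶠ y in 𝓝 x, ∑ k ∈ Finset.range (m + 1), C (c k y) * X ^ k =
      C A * ∏ i, (X + C (f i y)) ^ s i) :
    Submodule.span 𝕜 (Set.range fun k : Fin m => c' k) =
      Submodule.span 𝕜 (Set.range f') := by
  classical
  have hsum_le : ∑ i, s i ≤ m := by
    rw [← natDegree_prod_X_add_C_pow _ (fun i => f i x), ← natDegree_C_mul hA, ← h.self_of_nhds]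
    exact natDegree_sum_le_of_forall_le _ _ fun k hk =>
      (natDegree_C_mul_X_pow_le _ _).trans (Finset.mem_range_succ_iff.1 hk)
  have hdeg (i : ι) : (A • rootJacobian (fun j => f j x) s i).natDegree < m :=
    (natDegree_smul_le _ _).trans_lt <|
      (natDegree_rootJacobian_lt _ fun hi => hs i (by simp [hi])).trans_le hsum_le
  have hindep : LinearIndependent 𝕜 fun i => A • rootJacobian (fun j => f j x) s i :=
    (linearIndependent_rootJacobian hinj hs).units_smul fun _ => Units.mk0 A hA
  simp_rw [fun k : Fin m => fderiv_coeff_eq_sum_rootJacobian hf hc h k.isLt.le]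
  exact span_range_sum_smul_eq_of_linearIndependent
    (linearIndependent_coeff_of_natDegree_lt hindep hdeg) f'

end Derivative

section MvPolynomial

variable {σ : Type*}

theorem eval_smul_of_isHomogeneous {R : Type*} [CommSemiring R] {p : MvPolynomial σ R} {m : ℕ}
    (hp : p.IsHomogeneous m) (c : R) (x : σ → R) :
    MvPolynomial.eval (c • x) p = c ^ m * MvPolynomial.eval x p := by
  rw [MvPolynomial.eval_eq, MvPolynomial.eval_eq, Finset.mul_sum]
  refine Finset.sum_congr rfl fun e he => ?_
  simp only [Pi.smul_apply, smul_eq_mul, mul_pow, Finset.prod_mul_distrib,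
    Finset.prod_pow_eq_pow_sum, hp.degree_eq_sum_deg_support he]
  ring

theorem hasFDerivAt_mvPolynomial_eval {𝕜 : Type*} [NontriviallyNormedField 𝕜] [Fintype σ]
    (p : MvPolynomial σ 𝕜) (x : σ → 𝕜) :
    HasFDerivAt (fun y => MvPolynomial.eval y p)
      (∑ r, MvPolynomial.eval x (MvPolynomial.pderiv r p) •
        (ContinuousLinearMap.proj r : (σ → 𝕜) →L[𝕜] 𝕜)) x := by
  classical
  induction p using MvPolynomial.induction_on with
  | C c =>
    simp only [MvPolynomial.eval_C]
    refine (hasFDerivAt_const c x).congr_fderiv (ContinuousLinearMap.ext fun v => ?_)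
    simp
  | add p q hp hq =>
    simp only [map_add]
    refine (hp.add hq).congr_fderiv (ContinuousLinearMap.ext fun v => ?_)
    simp [add_mul, Finset.sum_add_distrib]
  | mul_X p i hp =>
    simp only [MvPolynomial.eval_mul, MvPolynomial.eval_X]
    refine (hp.mul (hasFDerivAt_apply i x)).congr_fderiv (ContinuousLinearMap.ext fun v => ?_)
    simp [MvPolynomial.pderiv_X, Pi.single_apply, add_mul, Finset.sum_add_distrib,
      Finset.mul_sum, mul_assoc, apply_ite]

theorem eval_add_smul_eq_sum_of_ne_zero {K : Type*} [Field K] {g : MvPolynomial σ K} {m : ℕ}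
    (hg : g.IsHomogeneous m) {a x : σ → K} {c : ℕ → K}
    (hc : ∀ t : K, MvPolynomial.eval (a + t • x) g = ∑ j ∈ Finset.range (m + 1), c j * t ^ j)
    {t : K} (ht : t ≠ 0) :
    MvPolynomial.eval (x + t • a) g = ∑ k ∈ Finset.range (m + 1), c (m - k) * t ^ k := by
  calc MvPolynomial.eval (x + t • a) g
      = MvPolynomial.eval (t • (a + t⁻¹ • x)) g := by
        rw [smul_add, smul_inv_smul₀ ht, add_comm]
    _ = ∑ j ∈ Finset.range (m + 1), t ^ m * (c j * t⁻¹ ^ j) := by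
        rw [eval_smul_of_isHomogeneous hg, hc, Finset.mul_sum]
    _ = ∑ k ∈ Finset.range (m + 1), t ^ m * (c (m - k) * t⁻¹ ^ (m - k)) :=
        (Finset.sum_range_reflect _ _).symm
    _ = ∑ k ∈ Finset.range (m + 1), c (m - k) * t ^ k :=
        Finset.sum_congr rfl fun k hk => by
          have hkm : k ≤ m := Finset.mem_range_succ_iff.1 hk
          rw [mul_left_comm, inv_pow, ← pow_sub₀ t ht (Nat.sub_le m k), Nat.sub_sub_self hkm]

theorem sum_C_mul_X_pow_eq_prod_X_add_C_pow {K ι : Type*} [Field K] [Infinite K] [Fintype ι]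
    {g : MvPolynomial σ K} {m : ℕ} (hg : g.IsHomogeneous m) {a x : σ → K} {c : ℕ → K}
    (hc : ∀ t : K, MvPolynomial.eval (a + t • x) g = ∑ j ∈ Finset.range (m + 1), c j * t ^ j)
    {r : ι → K} {s : ι → ℕ}
    (hfact : ∀ t : K, MvPolynomial.eval (x - t • a) g =
      MvPolynomial.eval a g * ∏ i, (r i - t) ^ s i) :
    ∑ k ∈ Finset.range (m + 1), C (c (m - k)) * X ^ k =
      C (MvPolynomial.eval a g) * ∏ i, (X + C (r i)) ^ s i := by
  refine eq_of_infinite_eval_eq _ _ ((Set.finite_singleton (0 : K)).infinite_compl.mono ?_)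
  intro t ht
  have hprod := hfact (-t)
  simp only [neg_smul, sub_neg_eq_add, eval_add_smul_eq_sum_of_ne_zero hg hc ht] at hprod
  simpa [eval_finsetSum, eval_prod, add_comm t] using hprod

end MvPolynomial

section DualCoords

variable {𝕜 σ : Type*} [NontriviallyNormedField 𝕜] [DecidableEq σ]

/-- The coordinates of a continuous linear functional on `σ → 𝕜` in the standard dual basis. It
sends the derivative of a function at a point to the gradient of that function. -/
def dualCoords : ((σ → 𝕜) →L[𝕜] 𝕜) →ₗ[𝕜] σ → 𝕜 where
  toFun L r := L (Pi.single r 1)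
  map_add' _ _ := rfl
  map_smul' _ _ := rfl

theorem dualCoords_sum_smul_proj [Fintype σ] (b : σ → 𝕜) :
    dualCoords (∑ r, b r • (ContinuousLinearMap.proj r : (σ → 𝕜) →L[𝕜] 𝕜)) = b := by
  funext r
  simp [dualCoords, Pi.single_apply]

end DualCoords

theorem span_grad_roots_eq_span_grad_coeffs_general
    {𝕜 σ ι : Type*} [NontriviallyNormedField 𝕜] [Finite σ] [DecidableEq σ] [Fintype ι]
    {g : MvPolynomial σ 𝕜} {m : ℕ} (hhom : g.IsHomogeneous m)
    {a : σ → 𝕜} (ha : MvPolynomial.eval a g ≠ 0) {x : σ → 𝕜}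
    {lam : ι → (σ → 𝕜) → 𝕜} (hlam : ∀ i, DifferentiableAt 𝕜 (lam i) x)
    (hinj : Function.Injective fun i => lam i x)
    {s : ι → ℕ} (hs : ∀ i, (s i : 𝕜) ≠ 0)
    (hfact : ∀ᶠ y in 𝓝 x, ∀ t : 𝕜, MvPolynomial.eval (y - t • a) g =
      MvPolynomial.eval a g * ∏ i, (lam i y - t) ^ s i)
    {gc : ℕ → MvPolynomial σ 𝕜}
    (hgc : ∀ᶠ y in 𝓝 x, ∀ t : 𝕜, MvPolynomial.eval (a + t • y) g =
      ∑ j ∈ Finset.range (m + 1), MvPolynomial.eval y (gc j) * t ^ j) :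
    Submodule.span 𝕜 (Set.range fun i => fun r => fderiv 𝕜 (lam i) x (Pi.single r 1)) =
      Submodule.span 𝕜 (Set.range fun j : Fin m => fun r =>
        MvPolynomial.eval x (MvPolynomial.pderiv r (gc (j + 1)))) := by
  have := Fintype.ofFinite σ
  let dgc (k : ℕ) : (σ → 𝕜) →L[𝕜] 𝕜 :=
    ∑ r, MvPolynomial.eval x (MvPolynomial.pderiv r (gc (m - k))) • ContinuousLinearMap.proj r
  have hspan : Submodule.span 𝕜 (Set.range fun k : Fin m => dgc k) =
      Submodule.span 𝕜 (Set.range fun i => fderiv 𝕜 (lam i) x) :=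
    span_fderiv_coeff_eq_span_fderiv_roots (fun i => (hlam i).hasFDerivAt)
      (fun k => hasFDerivAt_mvPolynomial_eval (gc (m - k)) x) hinj hs ha
      (hgc.mp (hfact.mono fun _ hy hc => sum_C_mul_X_pow_eq_prod_X_add_C_pow hhom hc hy))
  have hcoords (j : Fin m) : dualCoords (dgc j.rev) =
      fun r => MvPolynomial.eval x (MvPolynomial.pderiv r (gc (j + 1))) := by
    have hrev : m - (j.rev : ℕ) = j + 1 := by
      rw [Fin.val_rev]
      omega
    rw [dualCoords_sum_smul_proj, hrev]
  calc Submodule.span 𝕜 (Set.range (dualCoords ∘ fun i => fderiv 𝕜 (lam i) x))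
      = Submodule.span 𝕜 (Set.range (dualCoords ∘ fun k : Fin m => dgc k)) := by
        rw [Set.range_comp, Set.range_comp, ← Submodule.map_span, ← Submodule.map_span, hspan]
    _ = Submodule.span 𝕜 (Set.range fun j : Fin m => dualCoords (dgc j.rev)) := by
        rw [← Fin.rev_surjective.range_comp]
        rfl
    _ = _ := by simp only [hcoords]

/-- Proposition: if on an open set `U` the roots `λ₁(x),…,λ_d(x)` of `g(x − λa) = 0` are
analytic, pairwise distinct, and `g(x − λa) = g(a)·∏ (λᵢ(x) − λ)^{sᵢ}`, and the polynomials
`g₀,…,g_m` are defined by the expansion `g(a + λx) = Σ gⱼ(x) λʲ`, then for every `x ∈ U`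
the span of the gradients `∇λᵢ(x)` equals the span of the gradients `∇g₁(x),…,∇g_m(x)`. -/
theorem span_grad_roots_eq_span_grad_coeffs
    {n : ℕ} (g : MvPolynomial (Fin n) ℂ)
    (m : ℕ) (hhom : g.IsHomogeneous m)
    (a : Fin n → ℂ) (ha : MvPolynomial.eval a g ≠ 0)
    (U : Set (Fin n → ℂ)) (hU : IsOpen U)
    (d : ℕ) (lam : Fin d → (Fin n → ℂ) → ℂ)
    (hlam : ∀ i, AnalyticOnNhd ℂ (lam i) U)
    (hdist : ∀ x ∈ U, ∀ i j : Fin d, i ≠ j → lam i x ≠ lam j x)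
    (s : Fin d → ℕ) (hs : ∀ i, 0 < s i) (hsum : ∑ i, s i = m)
    (hfact : ∀ x ∈ U, ∀ t : ℂ,
      MvPolynomial.eval (x - t • a) g =
        MvPolynomial.eval a g * ∏ i, (lam i x - t) ^ s i)
    (gc : ℕ → MvPolynomial (Fin n) ℂ)
    (hgc : ∀ (x : Fin n → ℂ) (t : ℂ),
      MvPolynomial.eval (a + t • x) g =
        ∑ j ∈ Finset.range (m + 1), MvPolynomial.eval x (gc j) * t ^ j) :
    ∀ x ∈ U,
      Submodule.span ℂ
          (Set.range fun i : Fin d =>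
            (fun r : Fin n => fderiv ℂ (lam i) x (Pi.single r 1))) =
        Submodule.span ℂ
          (Set.range fun j : Fin m =>
            (fun r : Fin n => MvPolynomial.eval x (MvPolynomial.pderiv r (gc ((j : ℕ) + 1))))) := by
  intro x hx
  have hinj : Function.Injective fun i => lam i x := fun i j hij =>
    by_contra fun hne => hdist x hx i j hne hij
  exact span_grad_roots_eq_span_grad_coeffs_general hhom ha
    (fun i => (hlam i x hx).differentiableAt) hinj (fun i => Nat.cast_ne_zero.2 (hs i).ne')
    (eventually_of_mem (hU.mem_nhds hx) hfact) (Eventually.of_forall hgc)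
end

section
/- Let f, f₁,…,f_k ∈ ℂ[x₁,…,xₙ]. Suppose there exists a nonempty Zariski-open subset U ⊆ ℂⁿ such that for every x ∈ U the gradient ∇f(x) lies in the ℂ-linear span of ∇f₁(x),…,∇f_k(x). Then f is algebraic over the subfield ℂ(f₁,…,f_k) of the field of rational functions ℂ(x₁,…,xₙ). -/
/-!
A derivation `d` of `K(x₁,…,xₙ)` satisfies `d p = ∇p ⬝ (d x₁,…,d xₙ)` on polynomials. Clear the
denominators of the `d xᵢ`: if `d` kills every `fᵢ` and `∇f` lies pointwise in the span of the
`∇fᵢ`, the polynomial representing a multiple of `d f` vanishes on a Zariski-dense set, so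
`d f = 0`. In characteristic zero, however, an element killed by every derivation over a subfield
is algebraic over it: algebraically independent elements have linearly independent differentials.
-/

open MvPolynomial

section Differentials

open KaehlerDifferential

variable {R L : Type*} [CommRing R] [Field L] [CharZero L] [Algebra R L]

theorem formallySmooth_of_charZero [FaithfulSMul R L] : Algebra.FormallySmooth R L := by
  have : IsDomain R := (FaithfulSMul.algebraMap_injective R L).isDomain
  let : Algebra (FractionRing R) L := FractionRing.liftAlgebra R L
  have : CharZero (FractionRing R) :=
    (RingHom.charZero_iff (algebraMap (FractionRing R) L).injective).2 inferInstance
  have : Algebra.FormallySmooth R (FractionRing R) := .of_isLocalization (nonZeroDivisors R)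
  have : Algebra.FormallySmooth (FractionRing R) L := by
    obtain ⟨ι, v, hv⟩ := exists_isTranscendenceBasis' (FractionRing R) L
    have := hv.isAlgebraic_field
    exact .of_algebraicIndependent_of_isSeparable hv.1
  exact .comp R (FractionRing R) L

theorem mapBaseChange_injective_of_formallySmooth (R S T : Type*) [CommRing R] [CommRing S]
    [CommRing T] [Algebra R S] [Algebra R T] [Algebra S T] [IsScalarTower R S T]
    [Algebra.FormallySmooth S T] : Function.Injective (mapBaseChange R S T) := by
  rw [injective_iff_map_eq_zero]
  intro ω hω
  obtain ⟨η, rfl⟩ := (Algebra.H1Cotangent.exact_δ_mapBaseChange R S T ω).1 hω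
  rw [Subsingleton.elim η 0, map_zero]

theorem linearIndependent_D_of_algebraicIndependent {ι : Type*} {v : ι → L}
    (hv : AlgebraicIndependent R v) : LinearIndependent L fun i ↦ D R L (v i) := by
  let : Algebra (MvPolynomial ι R) L := (aeval v).toAlgebra
  have algebraMap_X (i : ι) : algebraMap (MvPolynomial ι R) L (X i) = v i := aeval_X v i
  have : IsScalarTower R (MvPolynomial ι R) L := .of_algebraMap_eq' (aeval v).comp_algebraMap.symm
  have : FaithfulSMul (MvPolynomial ι R) L := (faithfulSMul_iff_algebraMap_injective _ _).2 hv
  have : Algebra.FormallySmooth (MvPolynomial ι R) L := formallySmooth_of_charZero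
  have hdX := ((mvPolynomialBasis R ι).baseChange L).linearIndependent.map' _
    (LinearMap.ker_eq_bot.2 (mapBaseChange_injective_of_formallySmooth R (MvPolynomial ι R) L))
  simpa [Function.comp_def, algebraMap_X] using hdX

theorem isAlgebraic_of_forall_derivation_eq_zero {x : L}
    (hx : ∀ d : Derivation R L L, d x = 0) : IsAlgebraic R x := by
  by_contra htr
  have hDx : D R L x ≠ 0 :=
    (linearIndependent_D_of_algebraicIndependent
      (algebraicIndependent_iff_transcendental.2 htr)).ne_zero 0
  exact hDx ((Module.forall_dual_apply_eq_zero_iff L _).1 fun φ ↦ hx (φ.compDer (D R L)))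

theorem isAlgebraic_adjoin_of_forall_derivation_eq_zero {K : Type*} [Field K] [Algebra K L]
    {s : Set L} {x : L} (hx : ∀ d : Derivation K L L, (∀ y ∈ s, d y = 0) → d x = 0) :
    IsAlgebraic (IntermediateField.adjoin K s) x :=
  isAlgebraic_of_forall_derivation_eq_zero fun d ↦ hx (d.restrictScalars K) fun y hy ↦
    d.map_algebraMap ⟨y, IntermediateField.subset_adjoin K s hy⟩

end Differentials

section Gradient

variable {σ R : Type*} [CommRing R]

/-- The gradient `∇p(x)` of the polynomial `p` at the point `x`, as a coordinate vector. -/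
noncomputable def gradientAt (p : MvPolynomial σ R) (x : σ → R) : σ → R :=
  fun r ↦ eval x (pderiv r p)

theorem derivation_apply_eq_sum_pderiv_smul [Fintype σ] {M : Type*} [AddCommGroup M] [Module R M]
    [Module (MvPolynomial σ R) M] [IsScalarTower R (MvPolynomial σ R) M]
    (d : Derivation R (MvPolynomial σ R) M) (p : MvPolynomial σ R) :
    d p = ∑ r, pderiv r p • d (X r) := by
  calc
    d p = d.liftKaehlerDifferential (KaehlerDifferential.D R _ p) :=
      (d.liftKaehlerDifferential_comp_D p).symm
    _ = d.liftKaehlerDifferential (∑ r, pderiv r p • KaehlerDifferential.D R _ (X r)) := by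
      rw [← (KaehlerDifferential.mvPolynomialBasis R σ).sum_repr (KaehlerDifferential.D R _ p)]
      simp only [KaehlerDifferential.mvPolynomialBasis_repr_apply,
        KaehlerDifferential.mvPolynomialBasis_apply]
    _ = ∑ r, pderiv r p • d (X r) := by
      simp only [map_sum, map_smul, Derivation.liftKaehlerDifferential_comp_D]

theorem eval_derivation_apply [Fintype σ]
    (d : Derivation R (MvPolynomial σ R) (MvPolynomial σ R)) (p : MvPolynomial σ R) (x : σ → R) :
    eval x (d p) = gradientAt p x ⬝ᵥ fun r ↦ eval x (d (X r)) := by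
  simp only [derivation_apply_eq_sum_pderiv_smul d p, smul_eq_mul, map_sum, map_mul, dotProduct,
    gradientAt]

theorem eval_derivation_apply_eq_zero_of_gradientAt_mem_span [Finite σ] {ι : Type*}
    (d : Derivation R (MvPolynomial σ R) (MvPolynomial σ R)) {f : MvPolynomial σ R}
    {fs : ι → MvPolynomial σ R} {x : σ → R}
    (hf : gradientAt f x ∈ Submodule.span R (Set.range fun i ↦ gradientAt (fs i) x))
    (hd : ∀ i, eval x (d (fs i)) = 0) : eval x (d f) = 0 := by
  have := Fintype.ofFinite σ
  let w : σ → R := fun r ↦ eval x (d (X r))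
  have horth : ∀ i, gradientAt (fs i) x ⬝ᵥ w = 0 := fun i ↦
    (eval_derivation_apply d (fs i) x).symm.trans (hd i)
  have hle : Submodule.span R (Set.range fun i ↦ gradientAt (fs i) x) ≤
      LinearMap.ker ((dotProductBilin R R).flip w) :=
    Submodule.span_le.2 (Set.range_subset_iff.2 horth)
  exact (eval_derivation_apply d f x).trans (hle hf)

end Gradient

theorem exists_derivation_mvPolynomial_algebraMap_eq_smul {σ R A : Type*} [Finite σ] [CommRing R]
    [CommRing A] [Algebra R A] [Algebra (MvPolynomial σ R) A]
    [IsScalarTower R (MvPolynomial σ R) A] (S : Submonoid (MvPolynomial σ R)) [IsLocalization S A]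
    (d : Derivation R (MvPolynomial σ R) A) :
    ∃ b ∈ S, ∃ e : Derivation R (MvPolynomial σ R) (MvPolynomial σ R),
      ∀ p, algebraMap (MvPolynomial σ R) A (e p) = b • d p := by
  obtain ⟨b, hb⟩ := IsLocalization.exist_integer_multiples_of_finite S fun r ↦ d (X r)
  choose v hv using hb
  have heq : (Algebra.linearMap (MvPolynomial σ R) A).compDer (mkDerivation R v) =
      (b : MvPolynomial σ R) • d := by
    ext r
    simpa using hv r
  exact ⟨b, b.2, mkDerivation R v, fun p ↦ Derivation.congr_fun heq p⟩

theorem vanishingIdeal_setOf_eval_ne_zero {σ K : Type*} [Field K] [Infinite K]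
    {p : MvPolynomial σ K} (hp : p ≠ 0) : vanishingIdeal K {x | eval x p ≠ 0} = ⊥ := by
  refine (Submodule.eq_bot_iff _).2 fun g hg ↦ ?_
  have hgp : g * p = 0 := by
    refine MvPolynomial.funext fun x ↦ ?_
    rw [map_mul, map_zero, mul_eq_zero, or_iff_not_imp_right]
    exact hg x
  exact (mul_eq_zero.1 hgp).resolve_right hp

theorem IsZariskiOpen.vanishingIdeal_eq_bot {n : ℕ} {U : Set (Fin n → ℂ)} (hU : IsZariskiOpen U)
    (hne : U.Nonempty) : vanishingIdeal ℂ U = ⊥ := by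
  obtain ⟨S, hS⟩ := hU
  have hmem (x : Fin n → ℂ) : x ∈ U ↔ ∃ p ∈ S, eval x p ≠ 0 := by
    simpa using (Set.ext_iff.1 hS x).not
  obtain ⟨y, hy⟩ := hne
  obtain ⟨p, hpS, hpy⟩ := (hmem y).1 hy
  have hp : p ≠ 0 := by
    rintro rfl
    exact hpy (map_zero _)
  rw [eq_bot_iff, ← vanishingIdeal_setOf_eval_ne_zero hp]
  exact vanishingIdeal_anti_mono fun x hx ↦ (hmem x).2 ⟨p, hpS, hx⟩

section GradientInSpan

variable {σ ι K L : Type*} [Finite σ] [Field K] [Field L] [Algebra K L]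
  [Algebra (MvPolynomial σ K) L] [IsScalarTower K (MvPolynomial σ K) L]
  [IsFractionRing (MvPolynomial σ K) L] {f : MvPolynomial σ K} {fs : ι → MvPolynomial σ K}
  {U : Set (σ → K)}

theorem derivation_eq_zero_of_gradientAt_mem_span (hU : vanishingIdeal K U = ⊥)
    (hgrad : ∀ x ∈ U,
      gradientAt f x ∈ Submodule.span K (Set.range fun i ↦ gradientAt (fs i) x))
    (d : Derivation K L L) (hd : ∀ i, d (algebraMap _ L (fs i)) = 0) :
    d (algebraMap _ L f) = 0 := by
  obtain ⟨b, hb, e, he⟩ := exists_derivation_mvPolynomial_algebraMap_eq_smul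
    (nonZeroDivisors (MvPolynomial σ K)) (d.compAlgebraMap (MvPolynomial σ K))
  have hefs (i : ι) : e (fs i) = 0 := by
    apply IsFractionRing.injective (MvPolynomial σ K) L
    rw [he, map_zero]
    exact smul_eq_zero_of_right b (hd i)
  have hef : e f = 0 := by
    rw [← Submodule.mem_bot (MvPolynomial σ K), ← hU]
    exact fun x hx ↦ eval_derivation_apply_eq_zero_of_gradientAt_mem_span e (hgrad x hx)
      fun i ↦ by rw [hefs, map_zero]
  have hbf : algebraMap _ L b * d (algebraMap _ L f) = 0 := by
    rw [← Algebra.smul_def]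
    exact (he f).symm.trans (by rw [hef, map_zero])
  exact (mul_eq_zero.1 hbf).resolve_left
    (IsLocalization.to_map_ne_zero_of_mem_nonZeroDivisors L le_rfl hb)

theorem algebraic_of_gradient_in_span_general [CharZero K] (hU : vanishingIdeal K U = ⊥)
    (hgrad : ∀ x ∈ U,
      gradientAt f x ∈ Submodule.span K (Set.range fun i ↦ gradientAt (fs i) x)) :
    IsAlgebraic (IntermediateField.adjoin K (Set.range fun i ↦ algebraMap _ L (fs i)))
      (algebraMap _ L f) := by
  have : CharZero L := charZero_of_injective_algebraMap (algebraMap K L).injective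
  exact isAlgebraic_adjoin_of_forall_derivation_eq_zero fun d hd ↦
    derivation_eq_zero_of_gradientAt_mem_span hU hgrad d fun i ↦ hd _ ⟨i, rfl⟩

end GradientInSpan

/-- If on a nonempty Zariski-open set the gradient of `f` lies in the span of the
gradients of `f₁,…,f_k`, then `f` is algebraic over the subfield `ℂ(f₁,…,f_k)` of
the field of rational functions `ℂ(x₁,…,xₙ)`. -/
theorem algebraic_of_gradient_in_span
    {n k : ℕ} (f : MvPolynomial (Fin n) ℂ) (fs : Fin k → MvPolynomial (Fin n) ℂ)
    (U : Set (Fin n → ℂ)) (hU : IsZariskiOpen U) (hne : U.Nonempty)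
    (hgrad : ∀ x ∈ U,
      (fun r : Fin n => MvPolynomial.eval x (MvPolynomial.pderiv r f)) ∈
        Submodule.span ℂ (Set.range fun i : Fin k =>
          (fun r : Fin n => MvPolynomial.eval x (MvPolynomial.pderiv r (fs i))))) :
    IsAlgebraic
      (IntermediateField.adjoin ℂ
        (Set.range fun i : Fin k =>
          algebraMap (MvPolynomial (Fin n) ℂ) (FractionRing (MvPolynomial (Fin n) ℂ)) (fs i)))
      (algebraMap (MvPolynomial (Fin n) ℂ) (FractionRing (MvPolynomial (Fin n) ℂ)) f) :=
  algebraic_of_gradient_in_span_general (hU.vanishingIdeal_eq_bot hne) hgrad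
end

section
/- Let 𝔤 be a finite-dimensional complex Lie algebra. If C ⊆ S(𝔤) is a ℂ-subalgebra that is commutative with respect to the Lie–Poisson bracket, i.e. {f,g}(x) = 0 for all f, g ∈ C and all x ∈ 𝔤*, then the transcendence degree of C over ℂ satisfies trdeg C ≤ ½(dim 𝔤 + ind 𝔤). -/
/-- The transcendence degree of an `R`-algebra `A`: the supremum of the cardinalities of
subsets of `A` that are algebraically independent over `R`. -/
noncomputable def trdeg (R A : Type*) [CommRing R] [CommRing A] [Algebra R A] : Cardinal :=
  ⨆ s : {s : Set A // AlgebraicIndependent R ((↑) : s → A)}, Cardinal.mk s.1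

/-- The coadjoint stabilizer `𝔤_x = {ξ ∈ 𝔤 : ⟨x, [ξ, η]⟩ = 0 for all η ∈ 𝔤}`. -/
def coadjStab (L : Type*) [NormedAddCommGroup L] [NormedSpace ℂ L]
    (B : L →ₗ[ℂ] L →ₗ[ℂ] L) (x : L →L[ℂ] ℂ) : Submodule ℂ L where
  carrier := {ξ : L | ∀ η : L, x (B ξ η) = 0}
  add_mem' := by
    intro ξ ζ hξ hζ η
    simp [map_add, hξ η, hζ η]
  zero_mem' := by
    intro η
    simp
  smul_mem' := by
    intro c ξ hξ η
    simp [map_smul, hξ η]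

/-- The index of `𝔤`: `ind 𝔤 = min_{x ∈ 𝔤*} dim 𝔤_x`. -/
noncomputable def lieIndex (L : Type*) [NormedAddCommGroup L] [NormedSpace ℂ L]
    (B : L →ₗ[ℂ] L →ₗ[ℂ] L) : ℕ :=
  sInf (Set.range fun x : L →L[ℂ] ℂ => Module.finrank ℂ (coadjStab L B x))

/-! Let `p₁, …, pₙ ∈ C` be algebraically independent. By the Jacobian criterion their differentials
are linearly independent at every `x` off a proper Zariski-closed set, hence on a dense set, and
Poisson commutativity says that their span `W ⊆ 𝔤` is isotropic for the form
`(ξ, η) ↦ ⟨x, [ξ, η]⟩`, whose kernel is `𝔤_x`. As `W^⊥` has dimension at most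
`dim 𝔤 - n + dim 𝔤_x`, isotropy gives `2 n ≤ dim 𝔤 + dim 𝔤_x`. The points with `dim 𝔤_x = ind 𝔤`
form a nonempty open set, so `x` may be chosen among them. -/

section AlgebraicIndependence

open KaehlerDifferential MvPolynomial

theorem injective_mapBaseChange_of_formallySmooth (R A B : Type*) [CommRing R] [CommRing A]
    [CommRing B] [Algebra R A] [Algebra R B] [Algebra A B] [IsScalarTower R A B]
    [Algebra.FormallySmooth A B] : Function.Injective (mapBaseChange R A B) := by
  rw [injective_iff_map_eq_zero]
  intro x hx
  -- Formal smoothness makes `H1Cotangent A B`, which surjects onto the kernel, trivial.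
  obtain ⟨y, rfl⟩ := (Algebra.H1Cotangent.exact_δ_mapBaseChange R A B x).mp hx
  rw [Subsingleton.elim y 0, map_zero]

theorem formallySmooth_of_isDomain_of_charZero (k A K : Type*) [Field k] [CharZero k] [CommRing A]
    [IsDomain A] [Field K] [Algebra k A] [Algebra k K] [Algebra A K] [IsScalarTower k A K]
    [FaithfulSMul A K] [Algebra.EssFiniteType k K] : Algebra.FormallySmooth A K := by
  let F := FractionRing A
  let : Algebra F K := FractionRing.liftAlgebra A K
  have : IsScalarTower k F K := .to₁₃₄ k A F K
  have : CharZero F := charZero_of_injective_algebraMap (algebraMap k F).injective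
  have : Algebra.EssFiniteType F K := .of_comp k F K
  have : Algebra.FormallySmooth A F := .of_isLocalization (nonZeroDivisors A)
  exact .comp A F K

theorem linearIndependent_D_of_algebraicIndependent_of_field {k K ι : Type*} [Field k] [CharZero k]
    [Field K] [Algebra k K] [Algebra.EssFiniteType k K] {v : ι → K}
    (hv : AlgebraicIndependent k v) : LinearIndependent K fun i => D k K (v i) := by
  let P := MvPolynomial ι k
  let : Algebra P K := (aeval v).toRingHom.toAlgebra
  have algebraMap_eq_aeval (p : P) : algebraMap P K p = aeval v p := rfl
  have : IsScalarTower k P K := .of_algebraMap_eq fun r => by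
    rw [algebraMap_eq_aeval, MvPolynomial.algebraMap_eq, aeval_C]
  have : FaithfulSMul P K := (faithfulSMul_iff_algebraMap_injective P K).2 hv
  have : Algebra.FormallySmooth P K := formallySmooth_of_isDomain_of_charZero k P K
  have hD : (fun i => D k K (v i)) =
      mapBaseChange k P K ∘ (mvPolynomialBasis k ι).baseChange K := by
    funext i
    rw [Function.comp_apply, Module.Basis.baseChange_apply, mvPolynomialBasis_apply,
      mapBaseChange_tmul, map_D, one_smul, algebraMap_eq_aeval, aeval_X]
  rw [hD]
  exact ((mvPolynomialBasis k ι).baseChange K).linearIndependent.map' _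
    (LinearMap.ker_eq_bot.2 (injective_mapBaseChange_of_formallySmooth k P K))

theorem linearIndependent_D_of_algebraicIndependent_s11 {k A ι : Type*} [Field k] [CharZero k]
    [CommRing A] [IsDomain A] [Algebra k A] [Algebra.EssFiniteType k A] {f : ι → A}
    (hf : AlgebraicIndependent k f) : LinearIndependent A fun i => D k A (f i) := by
  let K := FractionRing A
  have : Algebra.EssFiniteType A K := .of_isLocalization _ (nonZeroDivisors A)
  have : Algebra.EssFiniteType k K := .comp k A K
  have hK : AlgebraicIndependent k fun i => algebraMap A K (f i) :=
    hf.map' (f := IsScalarTower.toAlgHom k A K) (IsFractionRing.injective A K)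
  refine .of_comp (map k k A K) ?_
  simpa only [Function.comp_def, map_D] using
    (linearIndependent_D_of_algebraicIndependent_of_field hK).restrict_scalars' A

theorem linearIndependent_pderiv_of_algebraicIndependent {k σ ι : Type*} [Field k] [CharZero k]
    [Finite σ] {f : ι → MvPolynomial σ k} (hf : AlgebraicIndependent k f) :
    LinearIndependent (MvPolynomial σ k) fun i m => pderiv m (f i) := by
  have := Fintype.ofFinite σ
  have hpderiv : (fun i m => pderiv m (f i)) =
      (mvPolynomialBasis k σ).equivFun ∘ fun i => D k _ (f i) := by
    ext1 i
    ext1 m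
    simp
  rw [hpderiv]
  exact (linearIndependent_D_of_algebraicIndependent_s11 hf).map' _
    (mvPolynomialBasis k σ).equivFun.ker

end AlgebraicIndependence

section Specialization

open Matrix

theorem exists_mul_eq_one_of_linearIndependent_row {K m n : Type*} [Field K] [Finite m]
    [Fintype n] [DecidableEq m] {M : Matrix m n K} (hM : LinearIndependent K M.row) :
    ∃ N : Matrix n m K, M * N = 1 := by
  have := Fintype.ofFinite m
  rw [← mulVec_surjective_iff_exists_right_inverse, ← coe_mulVecLin, ← LinearMap.range_eq_top]
  refine Submodule.eq_top_of_finrank_eq ?_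
  rw [Module.finrank_fintype_fun_eq_card]
  exact hM.rank_matrix

theorem exists_mul_eq_smul_one_of_linearIndependent_row {A m n : Type*} [CommRing A] [IsDomain A]
    [Finite m] [Fintype n] [DecidableEq m] {M : Matrix m n A} (hM : LinearIndependent A M.row) :
    ∃ (a : A) (N : Matrix n m A), a ≠ 0 ∧ M * N = a • 1 := by
  let K := FractionRing A
  have hinj := IsFractionRing.injective A K
  have hMK : LinearIndependent K (M.map (algebraMap A K)).row :=
    (LinearIndependent.iff_fractionRing A K).1 <| hM.map' ((Algebra.linearMap A K).compLeft n)
      (LinearMap.ker_eq_bot.2 hinj.comp_left)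
  obtain ⟨U, hU⟩ := exists_mul_eq_one_of_linearIndependent_row hMK
  obtain ⟨a, ha⟩ := IsLocalization.exist_integer_multiples_of_finite (nonZeroDivisors A)
    fun p : n × m => U p.1 p.2
  choose N hN using ha
  refine ⟨a, .of fun i j => N (i, j), nonZeroDivisors.ne_zero a.2, Matrix.map_injective hinj ?_⟩
  have hNU : (Matrix.of fun i j => N (i, j)).map (algebraMap A K) = algebraMap A K a • U := by
    ext i j
    simpa [Algebra.smul_def] using hN (i, j)
  beta_reduce
  rw [Matrix.map_mul, hNU, Matrix.mul_smul, hU]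
  ext i j
  simp [Matrix.one_apply, apply_ite (algebraMap A K)]

theorem exists_ne_zero_forall_linearIndependent_map_row {A : Type*} (F : Type*) {m n : Type*}
    [CommRing A] [IsDomain A] [CommRing F] [NoZeroDivisors F] [Finite m] [Finite n]
    {M : Matrix m n A} (hM : LinearIndependent A M.row) :
    ∃ a ≠ 0, ∀ φ : A →+* F, φ a ≠ 0 → LinearIndependent F (M.map φ).row := by
  classical
  have := Fintype.ofFinite m
  have := Fintype.ofFinite n
  obtain ⟨a, N, ha, hMN⟩ := exists_mul_eq_smul_one_of_linearIndependent_row hM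
  refine ⟨a, ha, fun φ hφ => ?_⟩
  have hφMN : M.map φ * N.map φ = φ a • 1 := by
    rw [← Matrix.map_mul, hMN]
    ext i j
    simp [Matrix.one_apply, apply_ite φ]
  rw [← vecMul_injective_iff, ← coe_vecMulLinear, injective_iff_map_eq_zero]
  intro c hc
  have hac : φ a • c = 0 := by
    rw [← vecMul_one (φ a • c), smul_vecMul, ← vecMul_smul, ← hφMN, ← vecMul_vecMul]
    rw [vecMulLinear_apply] at hc
    rw [hc, zero_vecMul]
  exact (smul_eq_zero.1 hac).resolve_left hφ

end Specialization

theorem dense_setOf_eval_ne_zero {𝕜 σ : Type*} [NontriviallyNormedField 𝕜] [Finite σ]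
    {p : MvPolynomial σ 𝕜} (hp : p ≠ 0) : Dense {y : σ → 𝕜 | MvPolynomial.eval y p ≠ 0} := by
  have := Fintype.ofFinite σ
  refine Metric.dense_iff.2 fun y ε hε => ?_
  by_contra! h
  refine hp (MvPolynomial.funext_set (fun i => Metric.ball (y i) ε)
    (fun i => infinite_of_mem_nhds _ (Metric.ball_mem_nhds _ hε)) fun z hz => ?_)
  rw [← ball_pi y hε] at hz
  by_contra hzp
  exact (Set.eq_empty_iff_forall_notMem.1 h) z ⟨hz, by simpa using hzp⟩

theorem two_mul_card_le_finrank_add_finrank_ker {K V ι : Type*} [Field K] [AddCommGroup V]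
    [Module K V] [FiniteDimensional K V] [Fintype ι] {ω : LinearMap.BilinForm K V} {v : ι → V}
    (hv : LinearIndependent K v) (hω : ∀ i j, ω (v i) (v j) = 0) :
    2 * Fintype.card ι ≤ Module.finrank K V + Module.finrank K ω.ker := by
  let W := Submodule.span K (Set.range v)
  have hvW (i : ι) : W ≤ (ω (v i)).ker :=
    Submodule.span_le.2 (Set.range_subset_iff.2 fun j => hω i j)
  have hW : W ≤ ω.orthogonal W := fun w hw => LinearMap.BilinForm.mem_orthogonal_iff.2 <|
    Submodule.span_le (p := (ω.flip w).ker).2 (Set.range_subset_iff.2 fun i => hvW i hw)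
  have hcard : Module.finrank K W = Fintype.card ι := finrank_span_eq_card hv
  have hdim := LinearMap.BilinForm.finrank_add_finrank_orthogonal' (B := ω) W
  have hker := Submodule.finrank_mono (inf_le_right : W ⊓ ω.ker ≤ ω.ker)
  have hisotropic := Submodule.finrank_mono hW
  omega

theorem isOpen_setOf_finrank_ker_le {𝕜 E F : Type*} [NontriviallyNormedField 𝕜] [CompleteSpace 𝕜]
    [NormedAddCommGroup E] [NormedSpace 𝕜 E] [FiniteDimensional 𝕜 E] [NormedAddCommGroup F]
    [NormedSpace 𝕜 F] (n : ℕ) :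
    IsOpen {f : E →L[𝕜] F | Module.finrank 𝕜 (f : E →ₗ[𝕜] F).ker ≤ n} := by
  have hle_iff (f : E →L[𝕜] F) : Module.finrank 𝕜 (f : E →ₗ[𝕜] F).ker ≤ n ↔
      ((Module.finrank 𝕜 E - n : ℕ) : Cardinal) ≤ (f : E →ₗ[𝕜] F).rank := by
    have hrank := (f : E →ₗ[𝕜] F).finrank_range_add_finrank_ker
    rw [LinearMap.rank, ← Module.finrank_eq_rank, Nat.cast_le]
    omega
  simp only [hle_iff]
  exact isOpen_setOfPred_nat_le_rank _

section PolynomialFunctions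

open MvPolynomial

variable {𝕜 L σ : Type*} [NontriviallyNormedField 𝕜] [NormedAddCommGroup L] [NormedSpace 𝕜 L]

/-- The polynomial function `x ↦ p (⟨x, b i⟩)ᵢ` on the dual of `L`; for a basis `b` this identifies
`MvPolynomial σ 𝕜` with `S(L)`. -/
noncomputable def polyFun (b : σ → L) : MvPolynomial σ 𝕜 →ₐ[𝕜] ((L →L[𝕜] 𝕜) → 𝕜) :=
  aeval fun i x => x (b i)

theorem polyFun_apply (b : σ → L) (p : MvPolynomial σ 𝕜) (x : L →L[𝕜] 𝕜) :
    polyFun b p x = eval (fun i => x (b i)) p := by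
  induction p using MvPolynomial.induction_on <;> simp_all [polyFun]

theorem adjoin_range_apply_le_range_polyFun [Finite σ] (b : Module.Basis σ 𝕜 L) :
    Algebra.adjoin 𝕜 (Set.range fun (ξ : L) (x : L →L[𝕜] 𝕜) => x ξ) ≤ (polyFun b).range := by
  have := Fintype.ofFinite σ
  refine Algebra.adjoin_le ?_
  rintro _ ⟨ξ, rfl⟩
  refine ⟨∑ i, C (b.repr ξ i) * X i, ?_⟩
  funext x
  have h := congrArg x (b.sum_repr ξ)
  simpa [polyFun_apply, -Module.Basis.sum_repr] using h

variable [Fintype σ]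

/-- The differential of `polyFun b p` at `x`, as an element of `L`. -/
noncomputable def polyGrad (b : σ → L) (p : MvPolynomial σ 𝕜) (x : L →L[𝕜] 𝕜) : L :=
  ∑ i, eval (fun i => x (b i)) (pderiv i p) • b i

theorem hasFDerivAt_polyFun (b : σ → L) (p : MvPolynomial σ 𝕜) (x : L →L[𝕜] 𝕜) :
    HasFDerivAt (polyFun b p) (ContinuousLinearMap.apply 𝕜 𝕜 (polyGrad b p x)) x := by
  classical
  induction p using MvPolynomial.induction_on with
  | C a =>
    have hC : polyFun b (C a) = fun _ => a := funext fun y => by rw [polyFun_apply, eval_C]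
    rw [hC]
    exact (hasFDerivAt_const a x).congr_fderiv (by simp [polyGrad])
  | add p q hp hq =>
    rw [map_add]
    refine (hp.add hq).congr_fderiv ?_
    simp [polyGrad, add_smul, Finset.sum_add_distrib]
  | mul_X p j hp =>
    have hX : HasFDerivAt (polyFun b (X j)) (ContinuousLinearMap.apply 𝕜 𝕜 (b j)) x := by
      have hX_eq : polyFun b (X j) = ContinuousLinearMap.apply 𝕜 𝕜 (b j) :=
        funext fun y => by rw [polyFun_apply, eval_X, ContinuousLinearMap.apply_apply]
      rw [hX_eq]
      exact ContinuousLinearMap.hasFDerivAt _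
    rw [map_mul]
    refine (hp.mul hX).congr_fderiv ?_
    ext v
    simp [polyGrad, polyFun_apply, pderiv_X, Pi.single_apply, add_smul, Finset.sum_add_distrib,
      Finset.mul_sum, mul_assoc, apply_ite]

theorem fderiv_polyFun_apply (b : σ → L) (p : MvPolynomial σ 𝕜) (x v : L →L[𝕜] 𝕜) :
    fderiv 𝕜 (polyFun b p) x v = v (polyGrad b p x) := by
  rw [(hasFDerivAt_polyFun b p x).fderiv, ContinuousLinearMap.apply_apply]

theorem dense_setOf_linearIndependent_polyGrad [CompleteSpace 𝕜] [CharZero 𝕜] {ι : Type*}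
    [Finite ι] (b : Module.Basis σ 𝕜 L) {f : ι → MvPolynomial σ 𝕜}
    (hf : AlgebraicIndependent 𝕜 f) :
    Dense {x : L →L[𝕜] 𝕜 | LinearIndependent 𝕜 fun i => polyGrad b (f i) x} := by
  have := Module.Finite.of_basis b
  obtain ⟨a, ha, hJ⟩ := exists_ne_zero_forall_linearIndependent_map_row 𝕜
    (M := .of fun i m => pderiv m (f i)) (linearIndependent_pderiv_of_algebraicIndependent hf)
  let dualMap : (σ → 𝕜) →ₗ[𝕜] (L →L[𝕜] 𝕜) :=
    LinearMap.toContinuousLinearMap.toLinearMap ∘ₗ (b.constr 𝕜).toLinearMap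
  have hdual (y : σ → 𝕜) (i : σ) : dualMap y (b i) = y i := b.constr_basis 𝕜 y i
  have hrange : DenseRange dualMap := Function.Surjective.denseRange
    (LinearMap.toContinuousLinearMap.surjective.comp (b.constr 𝕜).surjective)
  refine (hrange.dense_image dualMap.continuous_of_finiteDimensional
    (dense_setOf_eval_ne_zero ha)).mono ?_
  rintro _ ⟨y, hy, rfl⟩
  have hrow := (hJ (eval y) hy).map' b.equivFun.symm.toLinearMap b.equivFun.symm.ker
  have hgrad : (fun i => polyGrad b (f i) (dualMap y)) =
      b.equivFun.symm ∘ fun i m => eval y (pderiv m (f i)) := by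
    funext i
    simp only [polyGrad, hdual, Function.comp_apply, b.equivFun_symm_apply]
  rw [Set.mem_ofPred_eq, hgrad]
  exact hrow

end PolynomialFunctions

section KirillovForm

variable {𝕜 L : Type*} [NontriviallyNormedField 𝕜] [NormedAddCommGroup L] [NormedSpace 𝕜 L]

/-- The Kirillov form `(ξ, η) ↦ ⟨x, [ξ, η]⟩` of the bracket `B` at `x`; its kernel is the coadjoint
stabilizer of `x`. -/
def kirillovForm (B : L →ₗ[𝕜] L →ₗ[𝕜] L) (x : L →L[𝕜] 𝕜) : LinearMap.BilinForm 𝕜 L :=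
  B.compr₂ x

theorem kirillovForm_apply (B : L →ₗ[𝕜] L →ₗ[𝕜] L) (x : L →L[𝕜] 𝕜) (ξ η : L) :
    kirillovForm B x ξ η = x (B ξ η) := rfl

theorem isOpen_setOf_finrank_ker_kirillovForm_le [CompleteSpace 𝕜] [FiniteDimensional 𝕜 L]
    (B : L →ₗ[𝕜] L →ₗ[𝕜] L) (n : ℕ) :
    IsOpen {x | Module.finrank 𝕜 (kirillovForm B x).ker ≤ n} := by
  let Φ (x : L →L[𝕜] 𝕜) : L →L[𝕜] L →L[𝕜] 𝕜 :=
    ContinuousLinearMap.compL 𝕜 L L 𝕜 x ∘L B.toContinuousBilinearMap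
  have hΦ : Continuous Φ := by fun_prop
  have hker (x : L →L[𝕜] 𝕜) : (kirillovForm B x).ker = (Φ x : L →ₗ[𝕜] L →L[𝕜] 𝕜).ker := by
    ext ξ
    simp [Φ, kirillovForm_apply, LinearMap.ext_iff, ContinuousLinearMap.ext_iff]
  have hfinrank (x : L →L[𝕜] 𝕜) : Module.finrank 𝕜 (kirillovForm B x).ker =
      Module.finrank 𝕜 (Φ x : L →ₗ[𝕜] L →L[𝕜] 𝕜).ker := by rw [hker]
  simp only [hfinrank]
  exact (isOpen_setOf_finrank_ker_le n).preimage hΦ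

end KirillovForm

theorem two_mul_card_le_of_poisson_commutative {𝕜 L σ ι : Type*} [NontriviallyNormedField 𝕜]
    [CompleteSpace 𝕜] [CharZero 𝕜] [NormedAddCommGroup L] [NormedSpace 𝕜 L] [Fintype σ]
    [Fintype ι] (b : Module.Basis σ 𝕜 L) (B : L →ₗ[𝕜] L →ₗ[𝕜] L) {f : ι → MvPolynomial σ 𝕜}
    (hf : AlgebraicIndependent 𝕜 f)
    (hcomm : ∀ i j, ∀ x : L →L[𝕜] 𝕜, x (B (polyGrad b (f i) x) (polyGrad b (f j) x)) = 0) :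
    2 * Fintype.card ι ≤
      Module.finrank 𝕜 L + ⨅ x, Module.finrank 𝕜 (kirillovForm B x).ker := by
  have := Module.Finite.of_basis b
  obtain ⟨x₀, hx₀⟩ := ciInf_mem fun x => Module.finrank 𝕜 (kirillovForm B x).ker
  obtain ⟨x, hind, hx⟩ := (dense_setOf_linearIndependent_polyGrad b hf).exists_mem_open
    (isOpen_setOf_finrank_ker_kirillovForm_le B _) ⟨x₀, hx₀.le⟩
  exact (two_mul_card_le_finrank_add_finrank_ker hind fun i j => hcomm i j x).trans
    (Nat.add_le_add_left hx _)

theorem trdeg_le_of_poisson_commutative_general {𝕜 L : Type*} [NontriviallyNormedField 𝕜]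
    [CompleteSpace 𝕜] [CharZero 𝕜] [NormedAddCommGroup L] [NormedSpace 𝕜 L]
    [FiniteDimensional 𝕜 L] (B : L →ₗ[𝕜] L →ₗ[𝕜] L) (C : Subalgebra 𝕜 ((L →L[𝕜] 𝕜) → 𝕜))
    (hpoly : ∀ p ∈ C, p ∈ Algebra.adjoin 𝕜 (Set.range fun (ξ : L) (x : L →L[𝕜] 𝕜) => x ξ))
    (hcomm : ∀ p ∈ C, ∀ q ∈ C, ∀ dp dq : (L →L[𝕜] 𝕜) → L,
      (∀ x v, fderiv 𝕜 p x v = v (dp x)) → (∀ x v, fderiv 𝕜 q x v = v (dq x)) →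
      ∀ x : L →L[𝕜] 𝕜, x (B (dp x) (dq x)) = 0) :
    2 * trdeg 𝕜 C ≤
      ((Module.finrank 𝕜 L + ⨅ x, Module.finrank 𝕜 (kirillovForm B x).ker : ℕ) : Cardinal) := by
  let b := Module.finBasis 𝕜 L
  set d := Module.finrank 𝕜 L + ⨅ x, Module.finrank 𝕜 (kirillovForm B x).ker
  have hcard (s : {s : Set C // AlgebraicIndependent 𝕜 ((↑) : s → C)}) :
      Cardinal.mk s.1 ≤ (d / 2 : ℕ) := by
    obtain ⟨s, hs⟩ := s
    choose f hf using fun i : s => adjoin_range_apply_le_range_polyFun b (hpoly _ i.1.2)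
    have hf_comp : polyFun b ∘ f = C.val ∘ (↑) := funext hf
    have hind : AlgebraicIndependent 𝕜 f :=
      .of_comp (polyFun b) (hf_comp ▸ hs.map' Subtype.val_injective)
    have := (linearIndependent_pderiv_of_algebraicIndependent hind).finite
    have := Fintype.ofFinite s
    rw [Cardinal.mk_fintype, Nat.cast_le, Nat.le_div_iff_mul_le two_pos, mul_comm]
    refine two_mul_card_le_of_poisson_commutative b B hind fun i j => ?_
    refine hcomm _ i.1.2 _ j.1.2 _ _ ?_ ?_ <;> rw [← hf] <;> exact fderiv_polyFun_apply b _
  calc 2 * trdeg 𝕜 C ≤ 2 * (d / 2 : ℕ) := by gcongr; exact ciSup_le' hcard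
    _ ≤ d := by exact_mod_cast Nat.mul_div_le d 2

theorem lieIndex_eq_iInf_finrank_ker_kirillovForm {L : Type*} [NormedAddCommGroup L]
    [NormedSpace ℂ L] (B : L →ₗ[ℂ] L →ₗ[ℂ] L) :
    lieIndex L B = ⨅ x, Module.finrank ℂ (kirillovForm B x).ker := by
  have hker (x : L →L[ℂ] ℂ) : (kirillovForm B x).ker = coadjStab L B x := by
    ext ξ
    exact LinearMap.ext_iff
  have hfinrank (x : L →L[ℂ] ℂ) : Module.finrank ℂ (kirillovForm B x).ker =
      Module.finrank ℂ (coadjStab L B x) := by rw [hker]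
  simp only [hfinrank, lieIndex, iInf]

/-- If `C ⊆ S(𝔤)` is a subalgebra commutative w.r.t. the Lie–Poisson bracket
`{p,q}(x) = ⟨x, [dp(x), dq(x)]⟩`, then `trdeg C ≤ ½ (dim 𝔤 + ind 𝔤)`, i.e.
`2 · trdeg C ≤ dim 𝔤 + ind 𝔤`. -/
theorem trdeg_le_of_poisson_commutative
    {L : Type*} [NormedAddCommGroup L] [NormedSpace ℂ L] [FiniteDimensional ℂ L]
    (B : L →ₗ[ℂ] L →ₗ[ℂ] L) (hB : IsLieBracket L B)
    (C : Subalgebra ℂ ((L →L[ℂ] ℂ) → ℂ))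
    (hpoly : ∀ p ∈ C, IsPolyFun L p)
    (hcomm : ∀ p ∈ C, ∀ q ∈ C, ∀ dp dq : (L →L[ℂ] ℂ) → L,
      RepDeriv L p dp → RepDeriv L q dq →
      ∀ x : L →L[ℂ] ℂ, x (B (dp x) (dq x)) = 0) :
    2 * trdeg ℂ C ≤ ((Module.finrank ℂ L + lieIndex L B : ℕ) : Cardinal) := by
  rw [lieIndex_eq_iInf_finrank_ker_kirillovForm]
  exact trdeg_le_of_poisson_commutative_general B C hpoly hcomm
end
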